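/- arXiv:2209.07847 — 2 statements merged into one kernel-verified Lean document; each statement's English description precedes it below -/
import Mathlib

section
/- Let G be a finite simple graph on [n] with no isolated vertices. Then the highest nonzero squarefree power of its edge ideal has minimum depth: g_{I(G)}(ν(G)) = 0, i.e. depth(S/I(G)^{[ν(G)]}) = 2ν(G) − 1. -/
open MvPolynomial

section Preamble

variable (K : Type*) [Field K] {σ : Type*} [Fintype σ] [DecidableEq σ]

/-- A (monic) monomial of the polynomial ring. -/
def IsMonomial (f : MvPolynomial σ K) : Prop :=
  ∃ d : σ →₀ ℕ, f = monomial d 1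

/-- An ideal generated by monomials. -/
def IsMonomialIdeal (I : Ideal (MvPolynomial σ K)) : Prop :=
  ∃ A : Set (MvPolynomial σ K), (∀ u ∈ A, IsMonomial K u) ∧ I = Ideal.span A

/-- The unique minimal set of monomial generators `G(I)` of a monomial ideal:
the monomials of `I` that are minimal with respect to divisibility. -/
def minGens (I : Ideal (MvPolynomial σ K)) : Set (MvPolynomial σ K) :=
  {u | IsMonomial K u ∧ u ∈ I ∧ ∀ v, IsMonomial K v → v ∈ I → v ∣ u → v = u}

/-- A squarefree monomial ideal. -/
def IsSqfreeMonomialIdeal (I : Ideal (MvPolynomial σ K)) : Prop :=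
  IsMonomialIdeal K I ∧ ∀ u ∈ minGens K I, Squarefree u

/-- The `k`-th squarefree power `I^{[k]}`: the ideal generated by the squarefree
products of `k` minimal monomial generators of `I`. -/
noncomputable def sqPow (I : Ideal (MvPolynomial σ K)) (k : ℕ) : Ideal (MvPolynomial σ K) :=
  Ideal.span {u | Squarefree u ∧ ∃ l : List (MvPolynomial σ K),
    l.length = k ∧ (∀ f ∈ l, f ∈ minGens K I) ∧ u = l.prod}

/-- `ν(I)`: the maximum length of a regular sequence of monomials in `I`. -/
noncomputable def monNu (I : Ideal (MvPolynomial σ K)) : ℕ :=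
  sSup {m | ∃ l : List (MvPolynomial σ K), l.length = m ∧
    (∀ f ∈ l, IsMonomial K f ∧ f ∈ I) ∧
    RingTheory.Sequence.IsRegular (MvPolynomial σ K) l}

/-- The minimal degree `d` of a minimal monomial generator of `I`
(so `d_k = minDeg (I^{[k]})`). -/
noncomputable def minDeg (I : Ideal (MvPolynomial σ K)) : ℕ :=
  sInf (totalDegree '' minGens K I)

/-- `depth(S/I)`: the maximum length of an `S/I`-regular sequence of elements of
the graded maximal ideal `(x_1, …, x_n)`. -/
noncomputable def qdepth (I : Ideal (MvPolynomial σ K)) : ℕ :=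
  sSup {m | ∃ l : List (MvPolynomial σ K), l.length = m ∧
    (∀ f ∈ l, f ∈ Ideal.span (Set.range (X : σ → MvPolynomial σ K))) ∧
    RingTheory.Sequence.IsRegular (MvPolynomial σ K ⧸ I) l}

/-- `I` has linear quotients with respect to the ordering `L` of its minimal
monomial generators: each successive colon ideal is generated by variables. -/
def HasLinearQuotientsOrder (I : Ideal (MvPolynomial σ K))
    (L : List (MvPolynomial σ K)) : Prop :=
  L.Nodup ∧ (∀ u, u ∈ L ↔ u ∈ minGens K I) ∧
  ∀ i : Fin L.length, 0 < (i : ℕ) →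
    ∃ A : Set σ,
      Submodule.colon (Ideal.span {u | u ∈ L.take (i : ℕ)}) (Ideal.span {L.get i})
        = Ideal.span (X '' A)

/-- A monomial ideal with linear quotients. -/
def HasLinearQuotients (I : Ideal (MvPolynomial σ K)) : Prop :=
  ∃ L, HasLinearQuotientsOrder K I L

/-- A polymatroidal ideal: a monomial ideal generated in a single degree whose
minimal generators satisfy the exchange property. -/
def IsPolymatroidal (I : Ideal (MvPolynomial σ K)) : Prop :=
  IsMonomialIdeal K I ∧
  (∃ d, ∀ u ∈ minGens K I, totalDegree u = d) ∧
  ∀ u ∈ minGens K I, ∀ v ∈ minGens K I, ∀ k : σ,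
    degreeOf k v < degreeOf k u →
    ∃ l : σ, degreeOf l u < degreeOf l v ∧
      ∃ w, u = X k * w ∧ X l * w ∈ minGens K I

/-- A matroidal ideal: a polymatroidal ideal all of whose minimal generators are
squarefree. -/
def IsMatroidal (I : Ideal (MvPolynomial σ K)) : Prop :=
  IsPolymatroidal K I ∧ ∀ u ∈ minGens K I, Squarefree u

/-- The squarefree part of a monomial ideal: the ideal generated by its squarefree
minimal generators. -/
noncomputable def sqfPart (I : Ideal (MvPolynomial σ K)) : Ideal (MvPolynomial σ K) :=
  Ideal.span {u | u ∈ minGens K I ∧ Squarefree u}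

/-- The squarefree Veronese ideal `𝔪^{[d]}`, generated by all squarefree
monomials of degree `d`. -/
noncomputable def veronese (d : ℕ) : Ideal (MvPolynomial σ K) :=
  Ideal.span {u | ∃ F : Finset σ, F.card = d ∧ u = ∏ i ∈ F, X i}

/-- A chordal graph: no induced cycle of length greater than 3. -/
def IsChordal {V : Type*} (G : SimpleGraph V) : Prop :=
  ∀ m : ℕ, 4 ≤ m → ¬ ∃ f : ZMod m → V, Function.Injective f ∧
    ∀ i j : ZMod m, G.Adj (f i) (f j) ↔ (i = j + 1 ∨ j = i + 1)

/-- A matching of `G`: a finite set of pairwise vertex-disjoint edges of `G`. -/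
def IsMatching (G : SimpleGraph σ) (M : Finset (Sym2 σ)) : Prop :=
  (↑M ⊆ G.edgeSet) ∧ (M : Set (Sym2 σ)).Pairwise fun e f => ∀ v, v ∈ e → v ∉ f

/-- A `k`-matching of `G`. -/
def IsKMatching (G : SimpleGraph σ) (M : Finset (Sym2 σ)) (k : ℕ) : Prop :=
  IsMatching G M ∧ M.card = k

/-- The vertex set `V(M)` of a matching. -/
def mVerts (M : Finset (Sym2 σ)) : Finset σ :=
  Finset.univ.filter fun v => ∃ e ∈ M, v ∈ e

/-- The squarefree monomial `∏_{v ∈ V(M)} x_v` attached to a matching. -/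
noncomputable def matchMon (M : Finset (Sym2 σ)) : MvPolynomial σ K :=
  ∏ v ∈ mVerts M, X v

/-- The edge ideal `I(G)` of a finite simple graph `G`. -/
noncomputable def edgeIdeal (G : SimpleGraph σ) : Ideal (MvPolynomial σ K) :=
  Ideal.span {u | ∃ i j, G.Adj i j ∧ u = X i * X j}

/-- The `k`-th squarefree power `I(G)^{[k]}` of the edge ideal, generated by the
monomials `∏_{v ∈ V(M)} x_v` of the `k`-matchings `M` of `G`. -/
noncomputable def matchPow (G : SimpleGraph σ) (k : ℕ) : Ideal (MvPolynomial σ K) :=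
  Ideal.span {u | ∃ M : Finset (Sym2 σ), IsKMatching G M k ∧ u = matchMon K M}

/-- The matching number `ν(G)`. -/
noncomputable def matchNum (G : SimpleGraph σ) : ℕ :=
  sSup {k | ∃ M : Finset (Sym2 σ), IsKMatching G M k}

end Preamble

/-!
The vertex sets of the maximum matchings of `G` are the bases of a matroid of rank `2ν(G)`, by the
alternating path argument, and this matroid is loopless when `G` has no isolated vertex. Hence
`I(G)^{[ν(G)]}` is the base ideal of a matroid, and it suffices to show that `depth (S / I(M))` is
`rank M - 1` for every matroid `M`, where `I(M)` is the base ideal enlarged by the loop variables.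

By Rees, the depth is the least `i` with `Ext^i(k, S / I(M)) ≠ 0`. These groups vanish for
`i < rank M - 1`, since every set of fewer than `rank M` nonloops is a nonspanning set, so that the
Stanley–Reisner complex contains a full skeleton. The group in degree `rank M - 1` is nonzero by
induction on the rank, starting with `I(M) = (x_i : i ∈ σ)` in rank one. For a nonloop `e` put
`J = I(M) : x_e` and let `L` be generated by `x_e` and the variables of the loops of `M / e`. Then
`I(M / e) = J + L`, while `I(M) ∩ L = J ∩ L` because a nonloop parallel to `e` spans `e`. The long
exact sequences of `0 → L / (J ∩ L) → S / J → S / (J + L) → 0` and, with `I = I(M)`, of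
`0 → L / (I ∩ L) → S / I → S / (I + L) → 0` then carry a nonzero class for `M / e` to one for `M` in
the next degree, the skeleton argument giving the vanishing needed for `S / J` and `S / (I + L)`.
-/

namespace TopSquarefreePower

open CategoryTheory Abelian RingTheory.Sequence

section Ext

universe w v u

variable {C : Type u} [Category.{v} C] [Abelian C] [HasExt.{w} C] (N : C)
  {S : ShortComplex C} {i : ℕ}

lemma subsingleton_ext_X₂ (hS : S.ShortExact) (h₁ : Subsingleton (Ext N S.X₁ i))
    (h₃ : Subsingleton (Ext N S.X₃ i)) : Subsingleton (Ext N S.X₂ i) := by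
  refine subsingleton_of_forall_eq 0 fun x ↦ ?_
  obtain ⟨y, rfl⟩ := Ext.covariant_sequence_exact₂ N hS x (Subsingleton.elim _ _)
  rw [Subsingleton.elim y 0, Ext.zero_comp]

lemma subsingleton_ext_X₃ (hS : S.ShortExact) (h₁ : Subsingleton (Ext N S.X₁ (i + 1)))
    (h₂ : Subsingleton (Ext N S.X₂ i)) : Subsingleton (Ext N S.X₃ i) := by
  refine subsingleton_of_forall_eq 0 fun x ↦ ?_
  obtain ⟨y, rfl⟩ := Ext.covariant_sequence_exact₃ N hS x rfl (Subsingleton.elim _ _)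
  rw [Subsingleton.elim y 0, Ext.zero_comp]

lemma subsingleton_ext_X₁_succ (hS : S.ShortExact) (h₂ : Subsingleton (Ext N S.X₂ (i + 1)))
    (h₃ : Subsingleton (Ext N S.X₃ i)) : Subsingleton (Ext N S.X₁ (i + 1)) := by
  refine subsingleton_of_forall_eq 0 fun x ↦ ?_
  obtain ⟨y, rfl⟩ := Ext.covariant_sequence_exact₁ N hS x (Subsingleton.elim _ _) rfl
  rw [Subsingleton.elim y 0, Ext.zero_comp]

lemma subsingleton_ext_X₁_of_smul_id_eq_zero {R : Type*} [CommRing R] [Linear R C] {x : R}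
    (hx : x • 𝟙 N = 0) (hS : S.ShortExact) {g : S.X₁ ⟶ S.X₂} (hf : S.f = x • g) {d : ℕ}
    (h : ∀ i < d, Subsingleton (Ext N S.X₃ i)) : ∀ i < d + 1, Subsingleton (Ext N S.X₁ i) := by
  rintro (_ | i) hi
  · have := hS.mono_f
    refine Ext.addEquiv₀.subsingleton_congr.2 (subsingleton_of_forall_eq 0 fun y ↦ ?_)
    have hxy : x • y = 0 := by rw [← Category.id_comp y, ← Linear.smul_comp, hx, Limits.zero_comp]
    rw [← cancel_mono S.f, hf, Linear.comp_smul, ← Linear.smul_comp, hxy, Limits.zero_comp,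
      Limits.zero_comp]
  · refine subsingleton_of_forall_eq 0 fun y ↦ ?_
    have hxy : x • y = 0 := by
      rw [← Ext.mk₀_id_comp y, ← Ext.smul_comp, ← Ext.mk₀_smul, hx, Ext.mk₀_zero, Ext.zero_comp]
    have hyf : y.comp (Ext.mk₀ S.f) (add_zero _) = 0 := by
      rw [hf, Ext.mk₀_smul, Ext.comp_smul, ← Ext.smul_comp, hxy, Ext.zero_comp]
    obtain ⟨z, rfl⟩ := Ext.covariant_sequence_exact₁ N hS y hyf rfl
    rw [(h i (by lia)).elim z 0, Ext.zero_comp]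

lemma not_subsingleton_ext_self_zero (hN : ¬ Limits.IsZero N) : ¬ Subsingleton (Ext N N 0) := by
  rw [Ext.addEquiv₀.subsingleton_congr]
  exact fun h ↦ hN ((Limits.IsZero.iff_id_eq_zero N).2 (h.elim _ _))

end Ext

section Quotient

universe u

variable {R : Type u} [CommRing R] {A M : Type u} [AddCommGroup A] [Module R A]
  [AddCommGroup M] [Module R M] {f : A →ₗ[R] M} {p q : Submodule R M} {r : Submodule R A}

/-- The short exact sequence `0 → A / f⁻¹(p) → M / p → M / (p + f(A)) → 0` attached to a linear map
`f : A → M` and a submodule `p` of `M`. The submodules `r = f⁻¹(p)` and `q = p + f(A)` are kept as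
variables so that either may be replaced by an equal one. -/
def quotientShortComplex (hr : p.comap f = r) (hq : p ⊔ f.range = q) :
    ShortComplex (ModuleCat.{u} R) :=
  ModuleCat.shortComplexOfCompEqZero (r.mapQ p f hr.ge)
    (Submodule.factor (hq ▸ le_sup_left : p ≤ q)) <| Submodule.linearMap_qext _ <|
      LinearMap.ext fun a ↦ (Submodule.Quotient.mk_eq_zero _).2 <|
        hq ▸ Submodule.mem_sup_right (f.mem_range_self a)

lemma quotientShortComplex_shortExact (hr : p.comap f = r) (hq : p ⊔ f.range = q) :
    (quotientShortComplex hr hq).ShortExact where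
  exact := by
    refine ModuleCat.shortComplex_exact _ (LinearMap.exact_iff.2 ?_)
    change (p.mapQ q LinearMap.id (hq ▸ le_sup_left)).ker = (r.mapQ p f hr.ge).range
    rw [Submodule.ker_mapQ, Submodule.range_mapQ, Submodule.comap_id, ← hq, Submodule.map_sup,
      Submodule.mkQ_map_self, bot_sup_eq]
  mono_f := by
    refine (ModuleCat.mono_iff_injective _).2 (LinearMap.ker_eq_bot.1 ?_)
    change (r.mapQ p f hr.ge).ker = ⊥
    rw [Submodule.ker_mapQ, hr, Submodule.mkQ_map_self]
  epi_g := (ModuleCat.epi_iff_surjective _).2 (Submodule.factor_surjective (hq ▸ le_sup_left))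

variable (N : ModuleCat.{u} R) {I J L : Ideal R} {i d : ℕ}

lemma range_mulLeft_eq_span (x : R) : (LinearMap.mulLeft R x).range = Ideal.span {x} := by
  ext y
  simp [Ideal.mem_span_singleton', mul_comm x]

lemma subsingleton_ext_quotient_of_colon (x : R) (hJ : ∀ f, f ∈ J ↔ x * f ∈ I)
    (h : Subsingleton (Ext N (.of R (R ⧸ J)) i))
    (h' : Subsingleton (Ext N (.of R (R ⧸ I ⊔ Ideal.span {x})) i)) :
    Subsingleton (Ext N (.of R (R ⧸ I)) i) :=
  have hcomap : Submodule.comap (LinearMap.mulLeft R x) I = J := Submodule.ext fun f ↦ (hJ f).symm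
  subsingleton_ext_X₂ N
    (quotientShortComplex_shortExact hcomap (by rw [range_mulLeft_eq_span])) h h'

lemma subsingleton_ext_quotient_of_regular {x : R} (hx : x ∈ Module.annihilator R N)
    (hreg : ∀ f, f ∈ I ↔ x * f ∈ I)
    (h : ∀ i < d, Subsingleton (Ext N (.of R (R ⧸ I ⊔ Ideal.span {x})) i)) :
    ∀ i < d + 1, Subsingleton (Ext N (.of R (R ⧸ I)) i) := by
  have hcomap : Submodule.comap (LinearMap.mulLeft R x) I = I := Submodule.ext fun f ↦ (hreg f).symm
  refine subsingleton_ext_X₁_of_smul_id_eq_zero N (x := x) (g := 𝟙 _) ?_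
    (quotientShortComplex_shortExact hcomap (by rw [range_mulLeft_eq_span])) ?_ h
  · exact ModuleCat.hom_ext <| LinearMap.ext <| Module.mem_annihilator.1 hx
  · exact ModuleCat.hom_ext <| Submodule.linearMap_qext _ rfl

/- The quotients by `I` and by `J` contain the same submodule `L / (I ∩ L) = L / (J ∩ L)`. -/
lemma subsingleton_ext_quotient_sup (hIJ : I ⊓ L = J ⊓ L)
    (hI : Subsingleton (Ext N (.of R (R ⧸ I)) (i + 1)))
    (hIL : Subsingleton (Ext N (.of R (R ⧸ I ⊔ L)) i))
    (hJ : Subsingleton (Ext N (.of R (R ⧸ J)) i)) :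
    Subsingleton (Ext N (.of R (R ⧸ J ⊔ L)) i) := by
  have hcomap : Submodule.comap L.subtype I = Submodule.comap L.subtype J := by
    ext ⟨f, hf⟩
    simpa [hf] using Ideal.ext_iff.1 hIJ f
  have hsup (I' : Ideal R) : I' ⊔ L.subtype.range = I' ⊔ L := by rw [Submodule.range_subtype]
  have hL := subsingleton_ext_X₁_succ N (quotientShortComplex_shortExact hcomap (hsup I)) hI hIL
  exact subsingleton_ext_X₃ N (quotientShortComplex_shortExact rfl (hsup J)) hL hJ

end Quotient

section Depth

universe u

variable {R : Type u} [CommRing R] {m I : Ideal R}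

lemma smul_top_quotient_lt_top (hm : m ≠ ⊤) (hI : I ≤ m) :
    m • (⊤ : Submodule R (R ⧸ I)) < ⊤ := by
  have hmap : m • (⊤ : Submodule R (R ⧸ I)) = Submodule.map I.mkQ m := by
    rw [← I.range_mkQ, LinearMap.range_eq_map, ← Submodule.map_smul'', Ideal.smul_eq_mul,
      Ideal.mul_top]
  rwa [lt_top_iff_ne_top, hmap, Ne, Submodule.map_mkQ_eq_top, sup_eq_right.2 hI]

lemma isGreatest_length_isRegular [IsNoetherianRing R] (M : ModuleCat.{u} R) [Module.Finite R M]
    (hM : m • (⊤ : Submodule R M) < ⊤) {d : ℕ}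
    (hlt : ∀ i < d, Subsingleton (Ext (.of R (R ⧸ m)) M i))
    (hd : ¬ Subsingleton (Ext (.of R (R ⧸ m)) M d)) :
    IsGreatest {k | ∃ rs : List R, rs.length = k ∧ (∀ r ∈ rs, r ∈ m) ∧ IsRegular M rs} d := by
  have hsupp : Module.support R (ModuleCat.of R (R ⧸ m)) = PrimeSpectrum.zeroLocus m := by
    rw [Module.support_eq_zeroLocus, Ideal.annihilator_quotient]
  refine ⟨ModuleCat.exists_isRegular_of_exists_subsingleton_ext m d M hM _ hsupp hlt, ?_⟩
  rintro _ ⟨rs, rfl, hrs, hreg⟩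
  by_contra! hlen
  exact hd <|
    ModuleCat.subsingleton_ext_of_exists_isRegular m _ hsupp.le M hM rs hrs hreg d hlen

variable (K σ : Type*) [Field K]

/-- The residue field `S / (x_i : i ∈ σ)` of the polynomial ring `S = K[x_i : i ∈ σ]` at its graded
maximal ideal, as an `S`-module. -/
noncomputable abbrev residueModule : ModuleCat (MvPolynomial σ K) :=
  .of _ (MvPolynomial σ K ⧸ idealOfVars σ K)

variable {σ}

lemma idealOfVars_ne_top : idealOfVars σ K ≠ ⊤ := by
  have h := C_mem_pow_idealOfVars_iff (σ := σ) (R := K) 1 1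
  rw [Ne, Ideal.eq_top_iff_one]
  simpa using h

lemma X_mem_annihilator_residueModule (e : σ) :
    X e ∈ Module.annihilator (MvPolynomial σ K) (residueModule K σ) := by
  rw [Ideal.annihilator_quotient]
  exact Ideal.subset_span ⟨e, rfl⟩

variable {K}

lemma qdepth_top : qdepth K (⊤ : Ideal (MvPolynomial σ K)) = 0 := by
  have hempty : {k | ∃ l : List (MvPolynomial σ K), l.length = k ∧
      (∀ f ∈ l, f ∈ idealOfVars σ K) ∧
      IsRegular (MvPolynomial σ K ⧸ (⊤ : Ideal (MvPolynomial σ K))) l} = ∅ := by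
    refine Set.eq_empty_iff_forall_notMem.2 ?_
    rintro _ ⟨l, -, -, hl⟩
    exact Submodule.Quotient.nontrivial_iff.1 hl.nontrivial rfl
  exact (congrArg sSup hempty).trans csSup_empty

lemma qdepth_eq_of_ext [Finite σ] {I : Ideal (MvPolynomial σ K)} (hI : I ≤ idealOfVars σ K) {d : ℕ}
    (hlt : ∀ i < d, Subsingleton (Ext (residueModule K σ) (.of _ (MvPolynomial σ K ⧸ I)) i))
    (hd : ¬ Subsingleton (Ext (residueModule K σ) (.of _ (MvPolynomial σ K ⧸ I)) d)) :
    qdepth K I = d :=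
  (isGreatest_length_isRegular (.of _ (MvPolynomial σ K ⧸ I))
    (smul_top_quotient_lt_top (idealOfVars_ne_top K) hI) hlt hd).csSup_eq

end Depth

section SquarefreeIdeal

variable {σ : Type*}

/-- The finite sets that meet `P`: the squarefree monomials of the ideal `(x_p : p ∈ P)`. -/
def meeting (P : Set σ) : UpperSet (Finset σ) where
  carrier := {F | ∃ p ∈ P, p ∈ F}
  upper' := fun _ _ hFF' ⟨p, hp, hpF⟩ ↦ ⟨p, hp, hFF' hpF⟩

lemma mem_meeting {P : Set σ} {F : Finset σ} : F ∈ meeting P ↔ ∃ p ∈ P, p ∈ F := Iff.rfl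

/-- The finite sets that land in `U` after adjoining `e`: the squarefree monomials of the colon
ideal by the variable `x_e`. -/
def colon [DecidableEq σ] (e : σ) (U : UpperSet (Finset σ)) : UpperSet (Finset σ) where
  carrier := {F | insert e F ∈ U}
  upper' := fun _ _ hFF' hF ↦ U.upper (Finset.insert_subset_insert e hFF') hF

lemma mem_colon [DecidableEq σ] {e : σ} {U : UpperSet (Finset σ)} {F : Finset σ} :
    F ∈ colon e U ↔ insert e F ∈ U := Iff.rfl

lemma colon_colon [DecidableEq σ] (e : σ) (U : UpperSet (Finset σ)) :
    colon e (colon e U) = colon e U := by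
  ext F
  simp [mem_colon]

variable (K : Type*) [CommSemiring K]

/-- The squarefree monomial ideal spanned by the monomials whose support belongs to `U`. -/
noncomputable def sqfreeIdeal (U : UpperSet (Finset σ)) : Ideal (MvPolynomial σ K) :=
  restrictSupportIdeal K (Finsupp.support ⁻¹' U) (U.upper.preimage fun _ _ ↦ Finsupp.support_mono)

variable {K} {U V : UpperSet (Finset σ)} {f : MvPolynomial σ K}

lemma mem_sqfreeIdeal : f ∈ sqfreeIdeal K U ↔ ∀ m ∈ f.support, m.support ∈ U := Iff.rfl

lemma sqfreeIdeal_sup : sqfreeIdeal K (U ⊔ V) = sqfreeIdeal K U ⊓ sqfreeIdeal K V := by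
  ext f
  simp [mem_sqfreeIdeal, UpperSet.mem_sup_iff, forall_and]

lemma sqfreeIdeal_eq_span_monomial {s : Set (σ →₀ ℕ)}
    (hs : ∀ m : σ →₀ ℕ, m.support ∈ U ↔ ∃ b ∈ s, b ≤ m) :
    sqfreeIdeal K U = Ideal.span ((fun b ↦ monomial b (1 : K)) '' s) := by
  ext f
  simp only [mem_sqfreeIdeal, mem_ideal_span_monomial_image, hs]

lemma sqfreeIdeal_inf : sqfreeIdeal K (U ⊓ V) = sqfreeIdeal K U ⊔ sqfreeIdeal K V := by
  have hspan (W : UpperSet (Finset σ)) := sqfreeIdeal_eq_span_monomial (K := K) (U := W)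
    (s := Finsupp.support ⁻¹' W)
    fun m ↦ ⟨fun hm ↦ ⟨m, hm, le_rfl⟩, fun ⟨b, hb, hbm⟩ ↦ W.upper (Finsupp.support_mono hbm) hb⟩
  rw [hspan, hspan, hspan, ← Ideal.span_union, ← Set.image_union]
  rfl

lemma sqfreeIdeal_meeting (P : Set σ) : sqfreeIdeal K (meeting P) = Ideal.span (X '' P) := by
  ext f
  simp [mem_sqfreeIdeal, mem_ideal_span_X_image, mem_meeting]

lemma sqfreeIdeal_inf_meeting_singleton (e : σ) :
    sqfreeIdeal K (U ⊓ meeting {e}) = sqfreeIdeal K U ⊔ Ideal.span {X e} := by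
  rw [sqfreeIdeal_inf, sqfreeIdeal_meeting, Set.image_singleton]

lemma mem_sqfreeIdeal_colon [DecidableEq σ] (e : σ) :
    f ∈ sqfreeIdeal K (colon e U) ↔ X e * f ∈ sqfreeIdeal K U := by
  have hsupport (m : σ →₀ ℕ) : (Finsupp.single e 1 + m).support = insert e m.support := by
    ext a
    by_cases ha : a = e <;> simp [ha]
  simp only [mem_sqfreeIdeal, support_X_mul, Finset.mem_map, forall_exists_index, and_imp,
    forall_apply_eq_imp_iff₂, addLeftEmbedding_apply, hsupport, mem_colon]

lemma sqfreeIdeal_eq_top (hU : ∅ ∈ U) : sqfreeIdeal K U = ⊤ :=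
  eq_top_iff.2 fun _ _ _ _ ↦ U.upper (Finset.empty_subset _) hU

lemma sqfreeIdeal_le_idealOfVars (hU : ∅ ∉ U) : sqfreeIdeal K U ≤ idealOfVars σ K := by
  rw [idealOfVars, ← Set.image_univ, ← sqfreeIdeal_meeting]
  intro f hf m hm
  obtain ⟨a, ha⟩ := Finset.nonempty_iff_ne_empty.2 fun h0 ↦ hU (h0 ▸ mem_sqfreeIdeal.1 hf m hm)
  exact ⟨a, Set.mem_univ a, ha⟩

end SquarefreeIdeal

section SquarefreeExt

variable (K : Type*) [Field K] {σ : Type*}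

/-- The group `Ext^i_S(k, S / I)`, where `k` is the residue field of the polynomial ring `S` and `I`
is the squarefree monomial ideal of `U`. -/
abbrev SqfreeExt (U : UpperSet (Finset σ)) (i : ℕ) : Type _ :=
  Ext (residueModule K σ) (.of _ (MvPolynomial σ K ⧸ sqfreeIdeal K U)) i

variable {K} {U : UpperSet (Finset σ)} {d i : ℕ}

lemma subsingleton_sqfreeExt_of_colon [DecidableEq σ] (e : σ)
    (hcolon : Subsingleton (SqfreeExt K (colon e U) i))
    (hadd : Subsingleton (SqfreeExt K (U ⊓ meeting {e}) i)) : Subsingleton (SqfreeExt K U i) := by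
  rw [SqfreeExt, sqfreeIdeal_inf_meeting_singleton] at hadd
  exact subsingleton_ext_quotient_of_colon _ (X e) (fun _ ↦ mem_sqfreeIdeal_colon e) hcolon hadd

lemma subsingleton_sqfreeExt_colon [DecidableEq σ] (e : σ)
    (h : ∀ i < d, Subsingleton (SqfreeExt K (colon e U ⊓ meeting {e}) i)) :
    ∀ i < d + 1, Subsingleton (SqfreeExt K (colon e U) i) := by
  refine subsingleton_ext_quotient_of_regular _ (X_mem_annihilator_residueModule K e)
    (fun f ↦ ?_) fun i hi ↦ ?_
  · rw [← mem_sqfreeIdeal_colon, colon_colon]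
  · rw [← sqfreeIdeal_inf_meeting_singleton]
    exact h i hi

lemma colon_eq_self [DecidableEq σ] {W : Finset σ} {e : σ} (heW : insert e W ∉ U)
    (hvar : ∀ a ∉ insert e W, {a} ∈ U) : colon e U = U := by
  ext F
  refine ⟨fun hF ↦ ?_, U.upper (Finset.subset_insert e F)⟩
  obtain ⟨a, haF, ha⟩ := Finset.not_subset.1 fun hsub : F ⊆ insert e W ↦
    heW (U.upper (Finset.insert_subset (Finset.mem_insert_self e W) hsub) hF)
  exact U.upper (Finset.singleton_subset_iff.2 haF) (hvar a ha)

/- `U` is the set of nonfaces of a simplicial complex with vertices in `V`, which contains the full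
`(d - 1)`-skeleton of the simplex on `V`. -/
lemma subsingleton_sqfreeExt_of_skeleton {V : Finset σ} (hvar : ∀ a ∉ V, {a} ∈ U)
    (hface : ∀ F ∈ U, F ⊆ V → d < F.card) (hd : d ≤ V.card) :
    ∀ i < d, Subsingleton (SqfreeExt K U i) := by
  classical
  induction V using Finset.induction_on generalizing U d with
  | empty => simp_all
  | insert e W he ih =>
    obtain _ | d := d
    · simp
    have hvar' {U' : UpperSet (Finset σ)} (hU' : ∀ a, {a} ∈ U → {a} ∈ U') :
        ∀ a ∉ W, {a} ∈ U' ⊓ meeting {e} := by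
      intro a ha
      by_cases hae : a = e
      · exact Or.inr ⟨e, rfl, by simp [hae]⟩
      · exact Or.inl (hU' a (hvar a (by simp [hae, ha])))
    rw [Finset.card_insert_of_notMem he] at hd
    have hcolon : ∀ i < d + 1, Subsingleton (SqfreeExt K (colon e U) i) := by
      refine subsingleton_sqfreeExt_colon e (ih (hvar' fun a ha ↦ U.upper (by simp) ha) ?_ (by lia))
      rintro F (hF | ⟨_, rfl, heF⟩) hFW
      · have := hface _ hF (Finset.insert_subset_insert e hFW)
        exact Nat.lt_of_succ_lt_succ (this.trans_le (Finset.card_insert_le e F))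
      · exact absurd (hFW heF) he
    by_cases hW : d + 1 ≤ W.card
    · refine fun i hi ↦ subsingleton_sqfreeExt_of_colon e (hcolon i hi)
        (ih (hvar' fun _ ↦ id) ?_ hW i hi)
      rintro F (hF | ⟨_, rfl, heF⟩) hFW
      · exact hface F hF (hFW.trans (Finset.subset_insert e W))
      · exact absurd (hFW heF) he
    · have heW : insert e W ∉ U := fun hmem ↦ by
        have := hface _ hmem subset_rfl
        rw [Finset.card_insert_of_notMem he] at this
        lia
      rwa [colon_eq_self heW hvar] at hcolon

end SquarefreeExt

section MatroidIdeal

open Matroid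

variable {σ : Type*} {M : Matroid σ} {e : σ} {F : Finset σ} {d : ℕ}

/-- The finite sets that span `M` or contain an element that is not a nonloop of `M`: the squarefree
monomials of the base ideal of `M` enlarged by the variables of the loops of `M` and of the elements
outside its ground set. With these variables added, contracting `M` keeps the polynomial ring. -/
def spanningUpperSet (M : Matroid σ) : UpperSet (Finset σ) where
  carrier := {F | (∀ p ∈ F, M.IsNonloop p) → M.Spanning (F : Set σ)}
  upper' := fun _ _ hFF' hF hF' ↦ (hF fun p hp ↦ hF' p (hFF' hp)).superset
    (Finset.coe_subset.2 hFF') fun p hp ↦ (hF' p hp).mem_ground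

lemma mem_spanningUpperSet (hF : ∀ p ∈ F, M.IsNonloop p) :
    F ∈ spanningUpperSet M ↔ M.Spanning (F : Set σ) := forall_prop_of_true hF

lemma singleton_mem_spanningUpperSet (he : ¬ M.IsNonloop e) : {e} ∈ spanningUpperSet M :=
  fun h ↦ absurd (h e (Finset.mem_singleton_self e)) he

lemma eRank_le_card_of_mem_spanningUpperSet (hF : F ∈ spanningUpperSet M)
    (hnonloop : ∀ p ∈ F, M.IsNonloop p) : M.eRank ≤ F.card := by
  rw [← (hF hnonloop).eRk_eq, ← Set.encard_coe_eq_coe_finsetCard]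
  exact M.eRk_le_encard F

lemma eRank_le_card_of_isNonloop_mem (hF : ∀ p, M.IsNonloop p → p ∈ F) : M.eRank ≤ F.card := by
  obtain ⟨B, hB⟩ := M.exists_isBase
  rw [← hB.encard_eq_eRank, ← Set.encard_coe_eq_coe_finsetCard]
  exact Set.encard_le_encard fun p hp ↦ hF p (hB.indep.isNonloop_of_mem hp)

lemma eRank_contract_singleton_add_one (he : M.IsNonloop e) :
    (M ／ {e}).eRank + 1 = M.eRank := by
  obtain ⟨B, hB⟩ := (M ／ {e}).exists_isBase
  obtain ⟨hBe, hdisj⟩ := he.indep.contract_isBase_iff.1 hB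
  rw [← hB.encard_eq_eRank, ← hBe.encard_eq_eRank, Set.encard_union_eq hdisj,
    Set.encard_singleton]

lemma ne_of_isNonloop_contract_singleton (he : e ∈ M.E) {p : σ}
    (hp : (M ／ {e}).IsNonloop p) : p ≠ e := by
  rintro rfl
  exact (contract_isNonloop_iff.1 hp).2 (M.mem_closure_self p)

lemma spanningUpperSet_contract [DecidableEq σ] (he : M.IsNonloop e) :
    spanningUpperSet (M ／ {e}) =
      colon e (spanningUpperSet M) ⊓ meeting {p | ¬ (M ／ {e}).IsNonloop p} := by
  refine SetLike.ext fun F ↦ ?_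
  by_cases hF : ∀ p ∈ F, (M ／ {e}).IsNonloop p
  · have hdisj : Disjoint (F : Set σ) {e} := Set.disjoint_singleton_right.2 fun heF ↦
      ne_of_isNonloop_contract_singleton he.mem_ground (hF e heF) rfl
    have hinsert : ∀ p ∈ insert e F, M.IsNonloop p :=
      Finset.forall_mem_insert _ _ _ |>.2 ⟨he, fun p hp ↦ (hF p hp).of_contract⟩
    have hnotMeet : F ∉ meeting {p | ¬ (M ／ {e}).IsNonloop p} := fun ⟨p, hp, hpF⟩ ↦ hp (hF p hpF)
    rw [UpperSet.mem_inf_iff, or_iff_left hnotMeet, mem_colon, mem_spanningUpperSet hF,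
      mem_spanningUpperSet hinsert, contract_spanning_iff (by simpa using he.mem_ground),
      and_iff_left hdisj, Finset.coe_insert, Set.union_singleton]
  · push Not at hF
    obtain ⟨p, hpF, hp⟩ := hF
    exact iff_of_true (fun h ↦ absurd (h p hpF) hp) (Or.inr ⟨p, hp, hpF⟩)

lemma spanningUpperSet_sup_meeting [DecidableEq σ] (he : M.IsNonloop e) :
    spanningUpperSet M ⊔ meeting {p | ¬ (M ／ {e}).IsNonloop p} =
      colon e (spanningUpperSet M) ⊔ meeting {p | ¬ (M ／ {e}).IsNonloop p} := by
  refine SetLike.ext fun F ↦ ?_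
  simp only [UpperSet.mem_sup_iff, and_congr_left_iff]
  rintro ⟨p, hp, hpF⟩
  refine ⟨(spanningUpperSet M).upper (Finset.subset_insert e F), fun heF hF ↦ ?_⟩
  have hspan : M.Spanning (insert e (F : Set σ)) := by
    rw [← Finset.coe_insert]
    exact heF (Finset.forall_mem_insert _ _ _ |>.2 ⟨he, hF⟩)
  have hpe : p ∈ M.closure {e} := by
    by_contra hpe
    exact hp (contract_isNonloop_iff.2 ⟨(hF p hpF).mem_ground, hpe⟩)
  have heF : e ∈ M.closure F := M.closure_subset_closure (Set.singleton_subset_iff.2 hpF)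
    ((hF p hpF).mem_closure_singleton hpe)
  rw [spanning_iff_closure_eq fun q hq ↦ (hF q hq).mem_ground, ← hspan.closure_eq,
    closure_insert_eq_of_mem_closure heF]

lemma spanningUpperSet_eq_meeting_univ (hM : M.eRank = 1) :
    spanningUpperSet M = meeting Set.univ := by
  ext F
  refine ⟨fun hF ↦ ?_, fun ⟨p, _, hpF⟩ hF ↦ ?_⟩
  · by_contra! hempty
    have hF0 : F = ∅ := Finset.eq_empty_of_forall_notMem fun p hp ↦ hempty ⟨p, trivial, hp⟩
    subst hF0
    have := eRank_le_card_of_mem_spanningUpperSet hF (by simp)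
    simp [hM] at this
  · have : M.RankFinite := M.eRank_ne_top_iff.1 (by simp [hM])
    rw [spanning_iff_eRk_le fun q hq ↦ (hF q hq).mem_ground, hM, ← (hF p hpF).eRk_eq]
    exact M.eRk_mono (Set.singleton_subset_iff.2 hpF)

variable {K : Type*} [Field K] [Finite σ]

lemma subsingleton_sqfreeExt_spanningUpperSet (hM : d < M.eRank) :
    ∀ i < d, Subsingleton (SqfreeExt K (spanningUpperSet M) i) := by
  obtain ⟨V, hV⟩ := (Set.toFinite {p | M.IsNonloop p}).exists_finset
  refine subsingleton_sqfreeExt_of_skeleton (V := V)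
    (fun a ha ↦ singleton_mem_spanningUpperSet fun h ↦ ha ((hV a).2 h)) (fun F hF hFV ↦ ?_) ?_
  · exact_mod_cast hM.trans_le <|
      eRank_le_card_of_mem_spanningUpperSet hF fun p hp ↦ (hV p).1 (hFV hp)
  · exact_mod_cast hM.le.trans <| eRank_le_card_of_isNonloop_mem fun p ↦ (hV p).2

lemma subsingleton_sqfreeExt_spanningUpperSet_inf_meeting (he : M.IsNonloop e)
    (hM : d < M.eRank) : ∀ i < d,
    Subsingleton (SqfreeExt K (spanningUpperSet M ⊓ meeting {p | ¬ (M ／ {e}).IsNonloop p}) i) := by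
  obtain ⟨V, hV⟩ := (Set.toFinite {p | (M ／ {e}).IsNonloop p}).exists_finset
  refine subsingleton_sqfreeExt_of_skeleton (V := V)
    (fun a ha ↦ Or.inr ⟨a, fun h ↦ ha ((hV a).2 h), by simp⟩) ?_ ?_
  · rintro F (hF | ⟨p, hp, hpF⟩) hFV
    · exact_mod_cast hM.trans_le <|
        eRank_le_card_of_mem_spanningUpperSet hF fun p hp ↦ ((hV p).1 (hFV hp)).of_contract
    · exact absurd ((hV p).1 (hFV hpF)) hp
  · rw [← eRank_contract_singleton_add_one he] at hM
    exact_mod_cast (Order.le_of_lt_add_one hM).trans <|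
      eRank_le_card_of_isNonloop_mem fun p ↦ (hV p).2

lemma subsingleton_sqfreeExt_colon_spanningUpperSet [DecidableEq σ] (he : M.IsNonloop e)
    (hM : d + 1 < M.eRank) :
    ∀ i < d + 1, Subsingleton (SqfreeExt K (colon e (spanningUpperSet M)) i) := by
  obtain ⟨V, hV⟩ := (Set.toFinite {p | M.IsNonloop p}).exists_finset
  refine subsingleton_sqfreeExt_colon e (subsingleton_sqfreeExt_of_skeleton
    (V := V.erase e) (fun a ha ↦ ?_) ?_ ?_)
  · by_cases hae : a = e
    · exact Or.inr ⟨e, rfl, by simp [hae]⟩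
    · exact Or.inl ((spanningUpperSet M).upper (Finset.subset_insert e {a})
        (singleton_mem_spanningUpperSet fun h ↦ ha (Finset.mem_erase.2 ⟨hae, (hV a).2 h⟩)))
  · rintro F (hF | ⟨_, rfl, heF⟩) hFV
    · have hcard : d + 1 < (insert e F).card := by
        exact_mod_cast hM.trans_le <| eRank_le_card_of_mem_spanningUpperSet hF <|
          Finset.forall_mem_insert _ _ _ |>.2
            ⟨he, fun p hp ↦ (hV p).1 (Finset.mem_of_mem_erase (hFV hp))⟩
      exact Nat.lt_of_succ_lt_succ (hcard.trans_le (Finset.card_insert_le e F))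
    · exact absurd (hFV heF) (Finset.notMem_erase _ _)
  · have hcard : d + 1 < V.card := by
      exact_mod_cast hM.trans_le <| eRank_le_card_of_isNonloop_mem fun p ↦ (hV p).2
    rw [Finset.card_erase_of_mem ((hV e).2 he)]
    lia

lemma not_subsingleton_sqfreeExt_spanningUpperSet (hM : M.eRank = (d + 1 : ℕ)) :
    ¬ Subsingleton (SqfreeExt K (spanningUpperSet M) d) := by
  classical
  induction d generalizing M with
  | zero =>
    have hideal : sqfreeIdeal K (spanningUpperSet M) = idealOfVars σ K := by
      rw [spanningUpperSet_eq_meeting_univ (by simpa using hM), sqfreeIdeal_meeting,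
        Set.image_univ, idealOfVars]
    rw [SqfreeExt, hideal]
    refine not_subsingleton_ext_self_zero _ fun hzero ↦ idealOfVars_ne_top (σ := σ) K ?_
    exact Ideal.Quotient.subsingleton_iff.1 (ModuleCat.subsingleton_of_isZero hzero)
  | succ d ih =>
    obtain ⟨e, he⟩ : ∃ e, M.IsNonloop e := by
      by_contra! hloops
      have := eRank_le_card_of_isNonloop_mem (F := ∅) fun p hp ↦ absurd hp (hloops p)
      simp [hM] at this
    have hlt : ((d + 1 : ℕ) : ℕ∞) < M.eRank := by
      rw [hM]
      exact_mod_cast (d + 1).lt_succ_self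
    have hcontract : (M ／ {e}).eRank = (d + 1 : ℕ) := by
      have := eRank_contract_singleton_add_one he
      rw [hM, Nat.cast_succ] at this
      exact (ENat.add_left_injective_of_ne_top ENat.one_ne_top) this
    intro hvanish
    refine ih hcontract ?_
    rw [SqfreeExt, spanningUpperSet_contract he, sqfreeIdeal_inf]
    refine subsingleton_ext_quotient_sup _ (I := sqfreeIdeal K (spanningUpperSet M)) ?_ hvanish ?_
      (subsingleton_sqfreeExt_colon_spanningUpperSet he (by exact_mod_cast hlt) d d.lt_succ_self)
    · rw [← sqfreeIdeal_sup, ← sqfreeIdeal_sup, spanningUpperSet_sup_meeting he]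
    · rw [← sqfreeIdeal_inf]
      exact subsingleton_sqfreeExt_spanningUpperSet_inf_meeting he hlt d d.lt_succ_self

theorem qdepth_sqfreeIdeal_spanningUpperSet {r : ℕ} (hM : M.eRank = r) :
    qdepth K (sqfreeIdeal K (spanningUpperSet M)) = r - 1 := by
  obtain _ | d := r
  · rw [sqfreeIdeal_eq_top, qdepth_top]
    have : M.RankFinite := M.eRank_ne_top_iff.1 (by simp [hM])
    refine fun _ ↦ (spanning_iff_eRk_le (by simp)).2 ?_
    simp [hM]
  · have hlt : d < M.eRank := by
      rw [hM]
      exact_mod_cast d.lt_succ_self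
    refine qdepth_eq_of_ext (sqfreeIdeal_le_idealOfVars fun hempty ↦ ?_)
      (subsingleton_sqfreeExt_spanningUpperSet hlt) (not_subsingleton_sqfreeExt_spanningUpperSet hM)
    have := eRank_le_card_of_mem_spanningUpperSet hempty (by simp)
    simp [hM] at this

end MatroidIdeal

section MatchingMatroid

lemma bddAbove_card_isMatching {σ : Type*} [Finite σ] (G : SimpleGraph σ) :
    BddAbove {k | ∃ M : Finset (Sym2 σ), IsKMatching G M k} := by
  have := Fintype.ofFinite (Sym2 σ)
  refine ⟨Fintype.card (Sym2 σ), ?_⟩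
  rintro _ ⟨M, -, rfl⟩
  exact M.card_le_univ

lemma sum_single_one_le_iff {σ : Type*} {A : Finset σ} {m : σ →₀ ℕ} :
    ∑ v ∈ A, Finsupp.single v 1 ≤ m ↔ A ⊆ m.support := by
  classical
  simp only [Finsupp.le_def, Finset.subset_iff, Finsupp.mem_support_iff,
    Finsupp.finsetSum_apply, Finsupp.single_apply, Finset.sum_ite_eq', ← Nat.one_le_iff_ne_zero]
  refine forall_congr' fun v ↦ ?_
  by_cases hv : v ∈ A <;> simp [hv]

variable {σ : Type*} [Fintype σ] [DecidableEq σ] {G : SimpleGraph σ} {M : Finset (Sym2 σ)}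
  {A B : Finset σ} {u v w : σ}

lemma mem_mVerts : v ∈ mVerts M ↔ ∃ e ∈ M, v ∈ e := Finset.mem_filter_univ v

lemma mVerts_insert (u v : σ) (M : Finset (Sym2 σ)) :
    mVerts (insert s(u, v) M) = insert u (insert v (mVerts M)) := by
  ext a
  simp [mem_mVerts, or_assoc]

lemma card_mVerts (hM : IsMatching G M) : (mVerts M).card = 2 * M.card := by
  have hunion : mVerts M = M.biUnion Sym2.toFinset := by
    ext v
    simp [mem_mVerts]
  have hdisj : (M : Set (Sym2 σ)).PairwiseDisjoint Sym2.toFinset := fun e he f hf hef ↦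
    Finset.disjoint_left.2 fun v hve hvf ↦
      hM.2 he hf hef v (Sym2.mem_toFinset.1 hve) (Sym2.mem_toFinset.1 hvf)
  have hcard : ∀ e ∈ M, e.toFinset.card = 2 := fun e he ↦
    Sym2.card_toFinset_of_not_isDiag e (G.not_isDiag_of_mem_edgeSet (hM.1 he))
  rw [hunion, Finset.card_biUnion hdisj, Finset.sum_congr rfl hcard, Finset.sum_const, smul_eq_mul,
    mul_comm]

/-- `A` is the vertex set of a matching of `G`. -/
def IsMatchable (G : SimpleGraph σ) (A : Finset σ) : Prop :=
  ∃ M, IsMatching G M ∧ mVerts M = A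

lemma IsMatchable.insert_insert (hA : IsMatchable G A) (huv : G.Adj u v) (hu : u ∉ A)
    (hv : v ∉ A) : IsMatchable G (insert u (insert v A)) := by
  obtain ⟨M, ⟨hedge, hdisj⟩, rfl⟩ := hA
  have hfresh : ∀ f ∈ M, ∀ a ∈ s(u, v), a ∉ f := by
    intro f hf a ha haf
    obtain rfl | rfl := Sym2.mem_iff.1 ha
    exacts [hu (mem_mVerts.2 ⟨f, hf, haf⟩), hv (mem_mVerts.2 ⟨f, hf, haf⟩)]
  refine ⟨insert s(u, v) M, ⟨?_, ?_⟩, mVerts_insert u v M⟩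
  · rw [Finset.coe_insert]
    exact Set.insert_subset huv hedge
  · rw [Finset.coe_insert]
    exact hdisj.insert fun f hf _ ↦
      ⟨hfresh f hf, fun a haf ha ↦ hfresh f hf a ha haf⟩

lemma IsMatchable.exists_partner (hA : IsMatchable G A) (hv : v ∈ A) :
    ∃ u ∈ A, G.Adj v u ∧ IsMatchable G ((A.erase v).erase u) := by
  obtain ⟨M, ⟨hedge, hdisj⟩, rfl⟩ := hA
  obtain ⟨e, he, hve⟩ := mem_mVerts.1 hv
  obtain ⟨u, rfl⟩ := Sym2.mem_iff_exists.1 hve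
  refine ⟨u, mem_mVerts.2 ⟨_, he, Sym2.mem_mk_right v u⟩, hedge he, M.erase s(v, u),
    ⟨fun f hf ↦ hedge (Finset.mem_of_mem_erase hf), hdisj.mono (by simp)⟩, ?_⟩
  have hfresh : ∀ a ∈ s(v, u), a ∉ mVerts (M.erase s(v, u)) := by
    intro a ha haM
    obtain ⟨f, hf, haf⟩ := mem_mVerts.1 haM
    exact hdisj he (Finset.mem_of_mem_erase hf) (Finset.ne_of_mem_erase hf).symm a ha haf
  rw [← Finset.insert_erase he, mVerts_insert, Finset.insert_erase he]
  have := hfresh v (Sym2.mem_mk_left v u)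
  have := hfresh u (Sym2.mem_mk_right v u)
  grind

/- Follow the alternating path of the two matchings that starts at `v`. -/
lemma IsMatchable.exchange (hA : IsMatchable G A) (hB : IsMatchable G B) (hvA : v ∈ A)
    (hvB : v ∉ B) :
    (∃ w ∈ B \ A, IsMatchable G (insert w (A.erase v))) ∨
      ∃ w ∈ A \ B, w ≠ v ∧ IsMatchable G (insert v (insert w B)) := by
  induction hn : A.card using Nat.strong_induction_on generalizing A B v with
  | _ n ih =>
  obtain ⟨u, huA, hvu, hA'⟩ := hA.exists_partner hvA
  have huv := hvu.ne'
  by_cases huB : u ∉ B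
  · exact Or.inr ⟨u, by simp [huA, huB], huv, hB.insert_insert hvu hvB huB⟩
  push Not at huB
  obtain ⟨w, hwB, huw, hB'⟩ := hB.exists_partner huB
  have hwu := huw.ne'
  have hwv : w ≠ v := ne_of_mem_of_not_mem hwB hvB
  by_cases hwA : w ∉ A
  · refine Or.inl ⟨w, by simp [hwA, hwB], ?_⟩
    convert hA'.insert_insert huw (by simp) (by simp [hwA]) using 1
    clear ih
    grind
  push Not at hwA
  have hlt : ((A.erase v).erase u).card < n :=
    hn ▸ Finset.card_lt_card ((Finset.erase_subset _ _).trans_ssubset (Finset.erase_ssubset hvA))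
  have hexch := ih _ hlt hA' hB' (v := w) (by simp [hwA, hwu, hwv]) (by simp) rfl
  clear ih
  simp only [Finset.mem_sdiff, Finset.mem_erase] at hexch ⊢
  obtain ⟨z, ⟨⟨hzw, hzu, hzB⟩, hzA⟩, h⟩ | ⟨z, ⟨⟨hzu, hzv, hzA⟩, hzB⟩, hzw, h⟩ := hexch
  · have hzv : z ≠ v := ne_of_mem_of_not_mem hzB hvB
    refine Or.inl ⟨z, ⟨hzB, fun hz ↦ hzA ⟨hzu, hzv, hz⟩⟩, ?_⟩
    convert h.insert_insert huw (by simp [hzu.symm]) (by simp [hzw.symm]) using 1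
    grind
  · refine Or.inr ⟨z, ⟨hzA, fun hz ↦ hzB ⟨hzw, hzu, hz⟩⟩, hzv, ?_⟩
    convert h.insert_insert hvu (by simp [hvB, hzv.symm, hwv.symm]) (by simp [hwu.symm, hzu.symm])
      using 1
    grind

lemma IsMatchable.card_le (hA : IsMatchable G A) : A.card ≤ 2 * matchNum G := by
  obtain ⟨M, hM, rfl⟩ := hA
  rw [card_mVerts hM]
  exact Nat.mul_le_mul_left 2 (le_csSup (bddAbove_card_isMatching G) ⟨M, hM, rfl⟩)

/-- `A` is the vertex set of a maximum matching of `G`. -/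
def IsMaxMatchable (G : SimpleGraph σ) (A : Finset σ) : Prop :=
  IsMatchable G A ∧ A.card = 2 * matchNum G

lemma isMaxMatchable_iff :
    IsMaxMatchable G A ↔ ∃ M, IsKMatching G M (matchNum G) ∧ mVerts M = A := by
  constructor
  · rintro ⟨⟨M, hM, rfl⟩, hcard⟩
    rw [card_mVerts hM] at hcard
    exact ⟨M, ⟨hM, by lia⟩, rfl⟩
  · rintro ⟨M, ⟨hM, hcard⟩, rfl⟩
    exact ⟨⟨M, hM, rfl⟩, by rw [card_mVerts hM, hcard]⟩

lemma exists_isMaxMatchable (G : SimpleGraph σ) : ∃ A, IsMaxMatchable G A := by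
  obtain ⟨M, hM⟩ : ∃ M, IsKMatching G M (matchNum G) :=
    Nat.sSup_mem (s := {k | ∃ M : Finset (Sym2 σ), IsKMatching G M k})
      ⟨0, ∅, ⟨by simp, by simp⟩, rfl⟩ (bddAbove_card_isMatching G)
  exact ⟨_, isMaxMatchable_iff.2 ⟨M, hM, rfl⟩⟩

lemma IsMaxMatchable.not_isMatchable_insert_insert (hA : IsMaxMatchable G A) (hu : u ∉ A)
    (hv : v ∉ A) (huv : u ≠ v) : ¬ IsMatchable G (insert u (insert v A)) := fun h ↦ by
  have := h.card_le
  rw [Finset.card_insert_of_notMem (by simp [hu, huv]), Finset.card_insert_of_notMem hv,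
    hA.2] at this
  lia

lemma IsMaxMatchable.insert_erase (hA : IsMaxMatchable G A) (hv : v ∈ A) (hw : w ∉ A)
    (h : IsMatchable G (insert w (A.erase v))) : IsMaxMatchable G (insert w (A.erase v)) := by
  refine ⟨h, ?_⟩
  rw [Finset.card_insert_of_notMem (by simp [hw]), Finset.card_erase_add_one hv, hA.2]

lemma IsMaxMatchable.exchange (hA : IsMaxMatchable G A) (hB : IsMaxMatchable G B) (hvA : v ∈ A)
    (hvB : v ∉ B) : ∃ w ∈ B \ A, IsMaxMatchable G (insert w (A.erase v)) := by
  obtain ⟨w, hw, h⟩ | ⟨w, hw, hwv, h⟩ := hA.1.exchange hB.1 hvA hvB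
  · exact ⟨w, hw, hA.insert_erase hvA (Finset.mem_sdiff.1 hw).2 h⟩
  · exact absurd h (hB.not_isMatchable_insert_insert hvB (Finset.mem_sdiff.1 hw).2 hwv.symm)

lemma exists_isMaxMatchable_mem (hvw : G.Adj v w) : ∃ A, IsMaxMatchable G A ∧ v ∈ A := by
  obtain ⟨A, hA⟩ := exists_isMaxMatchable G
  by_cases hv : v ∈ A
  · exact ⟨A, hA, hv⟩
  have hw : w ∈ A := by
    by_contra hw
    exact hA.not_isMatchable_insert_insert hv hw hvw.ne (hA.1.insert_insert hvw hv hw)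
  obtain ⟨u, hu, hwu, hA'⟩ := hA.1.exists_partner hw
  refine ⟨insert v (A.erase u), hA.insert_erase hu hv ?_, Finset.mem_insert_self _ _⟩
  convert hA'.insert_insert hvw (by simp [hv]) (by simp) using 2
  rw [Finset.erase_right_comm, Finset.insert_erase (Finset.mem_erase.2 ⟨hwu.ne, hw⟩)]

/-- The matroid on the vertices of `G` whose bases are the vertex sets of the maximum matchings. -/
noncomputable def matchingMatroid (G : SimpleGraph σ) : Matroid σ :=
  Matroid.ofIsBaseOfFinite Set.finite_univ
    (fun B ↦ ∃ A : Finset σ, (A : Set σ) = B ∧ IsMaxMatchable G A)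
    ((exists_isMaxMatchable G).imp' _ fun A hA ↦ ⟨A, rfl, hA⟩)
    (by
      rintro _ _ ⟨A, rfl, hA⟩ ⟨B, rfl, hB⟩ v ⟨hvA, hvB⟩
      obtain ⟨w, hw, h⟩ := hA.exchange hB hvA hvB
      exact ⟨w, by simpa using hw, _, by simp, h⟩)
    (fun _ _ ↦ Set.subset_univ _)

lemma matchingMatroid_isBase_iff {B : Set σ} :
    (matchingMatroid G).IsBase B ↔ ∃ A : Finset σ, (A : Set σ) = B ∧ IsMaxMatchable G A := Iff.rfl

lemma eRank_matchingMatroid (G : SimpleGraph σ) :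
    (matchingMatroid G).eRank = (2 * matchNum G : ℕ) := by
  obtain ⟨A, hA⟩ := exists_isMaxMatchable G
  rw [← (matchingMatroid_isBase_iff.2 ⟨A, rfl, hA⟩).encard_eq_eRank,
    Set.encard_coe_eq_coe_finsetCard, hA.2]

lemma isNonloop_matchingMatroid (hvw : G.Adj v w) : (matchingMatroid G).IsNonloop v := by
  obtain ⟨A, hA, hv⟩ := exists_isMaxMatchable_mem hvw
  exact (matchingMatroid_isBase_iff.2 ⟨A, rfl, hA⟩).indep.isNonloop_of_mem hv

lemma mem_spanningUpperSet_matchingMatroid (hiso : ∀ v, ∃ w, G.Adj v w) :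
    A ∈ spanningUpperSet (matchingMatroid G) ↔
      ∃ M, IsKMatching G M (matchNum G) ∧ mVerts M ⊆ A := by
  rw [mem_spanningUpperSet fun v _ ↦ (hiso v).elim fun _ ↦ isNonloop_matchingMatroid,
    Matroid.spanning_iff_exists_isBase_subset (Set.subset_univ _)]
  constructor
  · rintro ⟨_, ⟨B, rfl, hB⟩, hBA⟩
    obtain ⟨M, hM, rfl⟩ := isMaxMatchable_iff.1 hB
    exact ⟨M, hM, Finset.coe_subset.1 hBA⟩
  · rintro ⟨M, hM, hMA⟩
    exact ⟨mVerts M, ⟨_, rfl, isMaxMatchable_iff.2 ⟨M, hM, rfl⟩⟩, Finset.coe_subset.2 hMA⟩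

variable (K : Type*) [Field K]

lemma matchMon_eq_monomial (M : Finset (Sym2 σ)) :
    matchMon K M = monomial (∑ v ∈ mVerts M, Finsupp.single v 1) 1 := by
  rw [monomial_sum_one]
  rfl

lemma matchPow_matchNum_eq_sqfreeIdeal (hiso : ∀ v, ∃ w, G.Adj v w) :
    matchPow K G (matchNum G) = sqfreeIdeal K (spanningUpperSet (matchingMatroid G)) := by
  rw [sqfreeIdeal_eq_span_monomial
    (s := (fun M ↦ ∑ v ∈ mVerts M, Finsupp.single v 1) '' {M | IsKMatching G M (matchNum G)})
    fun m ↦ by simp [mem_spanningUpperSet_matchingMatroid hiso, sum_single_one_le_iff]]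
  simp only [Set.image_image, ← matchMon_eq_monomial]
  exact congrArg Ideal.span (Set.ext fun u ↦ by simp [eq_comm])

end MatchingMatroid

end TopSquarefreePower

open TopSquarefreePower in
theorem min_depth_of_top_sqPow_general {K : Type*} [Field K] {σ : Type*} [Fintype σ] [DecidableEq σ]
    (G : SimpleGraph σ) (hiso : ∀ v, ∃ w, G.Adj v w) :
    qdepth K (matchPow K G (matchNum G)) = 2 * matchNum G - 1 := by
  rw [matchPow_matchNum_eq_sqfreeIdeal K hiso]
  exact qdepth_sqfreeIdeal_spanningUpperSet (eRank_matchingMatroid G)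

/-- Let `G` be a graph on `[n]` with no isolated vertices. Then
the highest nonzero squarefree power of `I(G)` has minimum depth:
`depth(S/I(G)^{[ν(G)]}) = 2ν(G) − 1`. -/
theorem min_depth_of_top_sqPow {K : Type*} [Field K] {n : ℕ}
    (G : SimpleGraph (Fin n))
    (hiso : ∀ v : Fin n, ∃ w, G.Adj v w) :
    qdepth K (matchPow K G (matchNum G)) = 2 * matchNum G - 1 :=
  min_depth_of_top_sqPow_general G hiso
end

section
/- Let s ≥ 2 and let G = H(a_1,…,a_s) be the multiple whiskered complete graph with a_i ≥ 1 whiskers at each vertex i of K_s. Then: (a) ν(G) = s; (b) G is cochordal; and (c) for 1 ≤ k ≤ s, one has g_{I(G)}(k) = 0 (i.e. depth(S/I(G)^{[k]}) = 2k − 1) if and only if ⌊s/2⌋ + 1 ≤ k ≤ s. -/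
open MvPolynomial

/-- Vertex set of the multiple whiskered complete graph `H(a_1, …, a_s)`: the
vertices of `K_s` together with `a i` whisker vertices for each vertex `i`. -/
abbrev WVert (s : ℕ) (a : Fin s → ℕ) := Fin s ⊕ (Σ i : Fin s, Fin (a i))

/-- The multiple whiskered complete graph `H(a_1, …, a_s)`: the complete graph on
`[s]` with `a i` pendant vertices (whiskers) attached to each vertex `i`. -/
def whiskered (s : ℕ) (a : Fin s → ℕ) : SimpleGraph (WVert s a) :=
  SimpleGraph.fromRel fun x y =>
    match x, y with
    | Sum.inl _, Sum.inl _ => True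
    | Sum.inl i, Sum.inr p => p.1 = i
    | _, _ => False

/-!
The depth of `S/I(G)^{[k]}` is the least `i` such that `Ext^i(K, S/I(G)^{[k]})` is nonzero. Now
`I(G)^{[k]}` is the Stanley–Reisner ideal of the complex `Δ` of vertex sets containing no
`k`-matching. All sets of fewer than `2k` vertices are faces of `Δ`, so the depth is at least
`2k - 1`, and the question is whether `Ext^{2k-1}` vanishes.

The short exact sequence `0 → S/(I : x) → S/I → S/(I, x) → 0` compares `Δ` with the closed star and
the deletion of a vertex `x` of `K_s`. The whiskers at `x` are cone points of the deletion, which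
raises its depth enough for vanishing and nonvanishing of `Ext^{2k-1}` to pass from the star to `Δ`.
Repeating this for all of `K_s` reduces to the closed star of `K_s` in `Δ`, whose faces are the
vertex sets whose whiskers are attached to fewer than `2k - s` vertices, since `K_s` together with
whiskers at `t` distinct vertices contains a `k`-matching iff `2k ≤ s + t`. This complex is void for
`2k ≤ s`. For `2k > s` its `Ext^{2k-1}` is nonzero, as Mayer–Vietoris sequences reduce the claim to
a simplex.
-/

open CategoryTheory Abelian Finset

section AbelianExt

variable {C : Type*} [Category* C] [Abelian C] [HasExt C] {S : ShortComplex C} {X : C} {i : ℕ}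

lemma subsingleton_ext_X₂ (hS : S.ShortExact) (h₁ : Subsingleton (Ext X S.X₁ i))
    (h₃ : Subsingleton (Ext X S.X₃ i)) : Subsingleton (Ext X S.X₂ i) :=
  subsingleton_of_forall_eq 0 fun z ↦ by
    obtain ⟨y, rfl⟩ := Ext.covariant_sequence_exact₂ _ hS z (Subsingleton.elim _ _)
    rw [Subsingleton.elim y 0, Ext.zero_comp]

lemma subsingleton_ext_X₁_succ (hS : S.ShortExact) (h₃ : Subsingleton (Ext X S.X₃ i))
    (h₂ : Subsingleton (Ext X S.X₂ (i + 1))) : Subsingleton (Ext X S.X₁ (i + 1)) :=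
  subsingleton_of_forall_eq 0 fun z ↦ by
    obtain ⟨y, rfl⟩ := Ext.covariant_sequence_exact₁ _ hS z (Subsingleton.elim _ _) rfl
    rw [Subsingleton.elim y 0, Ext.zero_comp]

lemma subsingleton_ext_X₃ (hS : S.ShortExact) (h₂ : Subsingleton (Ext X S.X₂ i))
    (h₁ : Subsingleton (Ext X S.X₁ (i + 1))) : Subsingleton (Ext X S.X₃ i) :=
  subsingleton_of_forall_eq 0 fun z ↦ by
    obtain ⟨y, rfl⟩ := Ext.covariant_sequence_exact₃ _ hS z rfl (Subsingleton.elim _ _)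
    rw [Subsingleton.elim y 0, Ext.zero_comp]

end AbelianExt

section ExtVanishes

universe u

variable {R : Type u} [CommRing R] {m : Ideal R}

/-- Vanishing of `Ext^i(R/m, M)`, the homological measure of depth along `m`. -/
def ExtVanishes (m : Ideal R) (M : Type u) [AddCommGroup M] [Module R M] (i : ℕ) : Prop :=
  Subsingleton (Ext (ModuleCat.of R (R ⧸ m)) (ModuleCat.of R M) i)

variable {A B C : Type u} [AddCommGroup A] [Module R A] [AddCommGroup B] [Module R B]
  [AddCommGroup C] [Module R C] {i : ℕ}

lemma shortExact_of_exact {f : A →ₗ[R] B} {g : B →ₗ[R] C} (h : Function.Exact f g)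
    (hf : Function.Injective f) (hg : Function.Surjective g) :
    (ModuleCat.shortComplexOfCompEqZero f g h.linearMap_comp_eq_zero).ShortExact where
  exact := ModuleCat.shortComplex_exact _ h
  mono_f := (ModuleCat.mono_iff_injective _).2 hf
  epi_g := (ModuleCat.epi_iff_surjective _).2 hg

namespace ExtVanishes

lemma middle {f : A →ₗ[R] B} {g : B →ₗ[R] C} (h : Function.Exact f g)
    (hf : Function.Injective f) (hg : Function.Surjective g)
    (hA : ExtVanishes m A i) (hC : ExtVanishes m C i) : ExtVanishes m B i :=
  subsingleton_ext_X₂ (shortExact_of_exact h hf hg) hA hC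

lemma left {f : A →ₗ[R] B} {g : B →ₗ[R] C} (h : Function.Exact f g)
    (hf : Function.Injective f) (hg : Function.Surjective g)
    (hC : ExtVanishes m C i) (hB : ExtVanishes m B (i + 1)) : ExtVanishes m A (i + 1) :=
  subsingleton_ext_X₁_succ (shortExact_of_exact h hf hg) hC hB

lemma right {f : A →ₗ[R] B} {g : B →ₗ[R] C} (h : Function.Exact f g)
    (hf : Function.Injective f) (hg : Function.Surjective g)
    (hB : ExtVanishes m B i) (hA : ExtVanishes m A (i + 1)) : ExtVanishes m C i :=
  subsingleton_ext_X₃ (shortExact_of_exact h hf hg) hB hA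

lemma of_subsingleton [Subsingleton A] (i : ℕ) : ExtVanishes m A i :=
  subsingleton_of_forall_eq 0 fun z ↦ by
    have hid : 𝟙 (ModuleCat.of R A) = 0 :=
      (ModuleCat.isZero_of_subsingleton (ModuleCat.of R A)).eq_of_src _ _
    rw [← Ext.comp_mk₀_id z, hid, Ext.mk₀_zero, Ext.comp_zero]

lemma not_quotient_self_zero (hm : m ≠ ⊤) : ¬ ExtVanishes m (R ⧸ m) 0 := fun h ↦ by
  have hhom : Subsingleton (ModuleCat.of R (R ⧸ m) ⟶ ModuleCat.of R (R ⧸ m)) :=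
    Ext.addEquiv₀.subsingleton_congr.mp h
  have hone : (1 : R ⧸ m) = 0 :=
    congr($(Subsingleton.elim (𝟙 (ModuleCat.of R (R ⧸ m))) 0).hom (1 : R ⧸ m))
  exact hm ((Ideal.eq_top_iff_one m).2 (Ideal.Quotient.eq_zero_iff_mem.1 hone))

lemma comp_lsmul_eq_zero {x : R} (hx : x ∈ m)
    (z : Ext (ModuleCat.of R (R ⧸ m)) (ModuleCat.of R A) i) :
    z.comp (Ext.mk₀ (ModuleCat.ofHom (LinearMap.lsmul R A x))) (add_zero i) = 0 := by
  have hann : x ∈ Module.annihilator R (ModuleCat.of R (R ⧸ m)) :=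
    (Ideal.annihilator_quotient (I := m)).symm ▸ hx
  exact congr($(Ext.postcomp_smul_id_eq_zero_of_mem_annihilator
    (M := ModuleCat.of R A) hann i).hom z)

lemma zero_of_isSMulRegular {x : R} (hx : x ∈ m) (hreg : IsSMulRegular A x) :
    ExtVanishes m A 0 :=
  have : Mono (ModuleCat.ofHom (LinearMap.lsmul R A x)) := (ModuleCat.mono_iff_injective _).2 hreg
  subsingleton_of_forall_eq 0 fun z ↦
    Ext.postcomp_mk₀_injective_of_mono _ (ModuleCat.ofHom (LinearMap.lsmul R A x)) <| by
      rw [map_zero]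
      exact comp_lsmul_eq_zero hx z

lemma succ_of_exact_lsmul {x : R} (hx : x ∈ m) {g : A →ₗ[R] C}
    (h : Function.Exact (LinearMap.lsmul R A x) g) (hreg : IsSMulRegular A x)
    (hg : Function.Surjective g) (hC : ExtVanishes m C i) : ExtVanishes m A (i + 1) :=
  have : Subsingleton (Ext (ModuleCat.of R (R ⧸ m)) (ModuleCat.of R C) i) := hC
  subsingleton_of_forall_eq 0 fun z ↦ by
    obtain ⟨y, rfl⟩ := Ext.covariant_sequence_exact₁ _ (shortExact_of_exact h hreg hg) z
      (comp_lsmul_eq_zero hx z) rfl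
    rw [show y = 0 from Subsingleton.elim _ _, Ext.zero_comp]

end ExtVanishes

lemma smul_top_quotient_lt_top {I : Ideal R} (hI : I ≤ m) (hm : m ≠ ⊤) :
    m • (⊤ : Submodule R (R ⧸ I)) < ⊤ := by
  refine lt_top_iff_ne_top.2 fun htop ↦ hm ?_
  rw [Ideal.smul_top_eq_map, Submodule.restrictScalars_eq_top_iff] at htop
  rw [← Ideal.comap_map_mk hI, ← Ideal.Quotient.algebraMap_eq, htop, Ideal.comap_top]

lemma forall_extVanishes_iff_exists_isRegular [IsNoetherianRing R] {I : Ideal R} (hI : I ≤ m)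
    (hm : m ≠ ⊤) (n : ℕ) :
    (∀ i < n, ExtVanishes m (R ⧸ I) i) ↔ ∃ rs : List R, rs.length = n ∧ (∀ r ∈ rs, r ∈ m) ∧
      RingTheory.Sequence.IsRegular (R ⧸ I) rs := by
  have hlt := smul_top_quotient_lt_top hI hm
  have hsupp : Module.support R (R ⧸ m) = PrimeSpectrum.zeroLocus m := by
    rw [Module.support_eq_zeroLocus, Ideal.annihilator_quotient]
  have : Module.Finite R (ModuleCat.of R (R ⧸ I)) := inferInstanceAs (Module.Finite R (R ⧸ I))
  have : Module.Finite R (ModuleCat.of R (R ⧸ m)) := inferInstanceAs (Module.Finite R (R ⧸ m))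
  constructor
  · exact ModuleCat.exists_isRegular_of_exists_subsingleton_ext m n (ModuleCat.of R (R ⧸ I)) hlt
      (ModuleCat.of R (R ⧸ m)) hsupp
  · rintro ⟨rs, rfl, hmem, hreg⟩
    exact ModuleCat.subsingleton_ext_of_exists_isRegular m (ModuleCat.of R (R ⧸ m)) hsupp.subset
      (ModuleCat.of R (R ⧸ I)) hlt rs hmem hreg

end ExtVanishes

section IdealSequences

universe u

variable {R : Type u} [CommRing R] {m I J : Ideal R} {x : R} {i : ℕ}

/-- Multiplication by `x` as a map `R/J → R/I`, where `J = (I : x)`. -/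
def mulQuotient (h : I.colon {x} = J) : R ⧸ J →ₗ[R] R ⧸ I :=
  Submodule.mapQ J I (LinearMap.lsmul R R x) fun p hp ↦ by
    rw [← h, Submodule.mem_colon_singleton, smul_eq_mul, mul_comm] at hp
    exact hp

lemma mulQuotient_mk (h : I.colon {x} = J) (p : R) :
    mulQuotient h (Submodule.Quotient.mk p) = Submodule.Quotient.mk (x * p) := rfl

lemma mulQuotient_injective (h : I.colon {x} = J) : Function.Injective (mulQuotient h) := by
  refine (injective_iff_map_eq_zero _).2 fun a ha ↦ ?_
  obtain ⟨p, rfl⟩ := Submodule.Quotient.mk_surjective J a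
  rw [mulQuotient_mk, Submodule.Quotient.mk_eq_zero] at ha
  rwa [Submodule.Quotient.mk_eq_zero, ← h, Submodule.mem_colon_singleton, smul_eq_mul, mul_comm]

lemma exact_mulQuotient_factor (h : I.colon {x} = J) :
    Function.Exact (mulQuotient h)
      (Submodule.factor (le_sup_left : I ≤ I ⊔ Ideal.span {x})) := by
  intro a
  obtain ⟨p, rfl⟩ := Submodule.mkQ_surjective I a
  rw [Submodule.factor_mk, Submodule.mkQ_apply, Submodule.Quotient.mk_eq_zero, sup_comm,
    Ideal.mem_span_singleton_sup]
  constructor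
  · rintro ⟨q, b, hb, rfl⟩
    refine ⟨Submodule.Quotient.mk q, (Submodule.Quotient.eq I).2 ?_⟩
    simpa [mul_comm] using hb
  · rintro ⟨b, hb⟩
    obtain ⟨q, rfl⟩ := Submodule.Quotient.mk_surjective J b
    exact ⟨q, p - x * q, (Submodule.Quotient.eq I).1 hb.symm, by ring⟩

namespace ExtVanishes

lemma of_colon_of_sup (h : I.colon {x} = J) (hJ : ExtVanishes m (R ⧸ J) i)
    (hsup : ExtVanishes m (R ⧸ I ⊔ Ideal.span {x}) i) : ExtVanishes m (R ⧸ I) i :=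
  middle (exact_mulQuotient_factor h) (mulQuotient_injective h) (Submodule.factor_surjective _)
    hJ hsup

lemma colon_succ (h : I.colon {x} = J) (hsup : ExtVanishes m (R ⧸ I ⊔ Ideal.span {x}) i)
    (hI : ExtVanishes m (R ⧸ I) (i + 1)) : ExtVanishes m (R ⧸ J) (i + 1) :=
  left (exact_mulQuotient_factor h) (mulQuotient_injective h) (Submodule.factor_surjective _)
    hsup hI

lemma sup_span_singleton (h : I.colon {x} = J) (hI : ExtVanishes m (R ⧸ I) i)
    (hJ : ExtVanishes m (R ⧸ J) (i + 1)) : ExtVanishes m (R ⧸ I ⊔ Ideal.span {x}) i :=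
  right (exact_mulQuotient_factor h) (mulQuotient_injective h) (Submodule.factor_surjective _)
    hI hJ

lemma mulQuotient_eq_lsmul (h : I.colon {x} = I) :
    mulQuotient h = LinearMap.lsmul R (R ⧸ I) x :=
  Submodule.linearMap_qext _ rfl

lemma zero_of_colon_eq_self (hx : x ∈ m) (h : I.colon {x} = I) : ExtVanishes m (R ⧸ I) 0 :=
  zero_of_isSMulRegular hx <| by
    simpa only [mulQuotient_eq_lsmul h] using! mulQuotient_injective h

lemma succ_of_colon_eq_self (hx : x ∈ m) (h : I.colon {x} = I)
    (hsup : ExtVanishes m (R ⧸ I ⊔ Ideal.span {x}) i) : ExtVanishes m (R ⧸ I) (i + 1) := by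
  have hinj := mulQuotient_injective h
  have hexact := exact_mulQuotient_factor h
  rw [mulQuotient_eq_lsmul h] at hinj hexact
  exact succ_of_exact_lsmul hx hexact hinj (Submodule.factor_surjective _) hsup

end ExtVanishes

lemma prod_factor_injective (A B : Ideal R) :
    Function.Injective ((Submodule.factor (inf_le_left : A ⊓ B ≤ A)).prod
      (Submodule.factor (inf_le_right : A ⊓ B ≤ B))) := by
  refine (injective_iff_map_eq_zero _).2 fun a ha ↦ ?_
  obtain ⟨p, rfl⟩ := Submodule.Quotient.mk_surjective _ a
  have hA : p ∈ A := (Submodule.Quotient.mk_eq_zero A).1 congr($ha.1)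
  have hB : p ∈ B := (Submodule.Quotient.mk_eq_zero B).1 congr($ha.2)
  exact (Submodule.Quotient.mk_eq_zero _).2 ⟨hA, hB⟩

lemma coprod_neg_factor_surjective (A B : Ideal R) :
    Function.Surjective ((Submodule.factor (le_sup_left : A ≤ A ⊔ B)).coprod
      (-Submodule.factor (le_sup_right : B ≤ A ⊔ B))) := fun c ↦ by
  obtain ⟨a, rfl⟩ := Submodule.factor_surjective (le_sup_left : A ≤ A ⊔ B) c
  exact ⟨(a, 0), by simp⟩

lemma exact_prod_factor_coprod_factor (A B : Ideal R) :
    Function.Exact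
      ((Submodule.factor (inf_le_left : A ⊓ B ≤ A)).prod
        (Submodule.factor (inf_le_right : A ⊓ B ≤ B)))
      ((Submodule.factor (le_sup_left : A ≤ A ⊔ B)).coprod
        (-Submodule.factor (le_sup_right : B ≤ A ⊔ B))) := by
  rintro ⟨a, b⟩
  obtain ⟨p, rfl⟩ := Submodule.mkQ_surjective _ a
  obtain ⟨q, rfl⟩ := Submodule.mkQ_surjective _ b
  rw [LinearMap.coprod_apply, LinearMap.neg_apply, Submodule.factor_mk, Submodule.factor_mk,
    ← sub_eq_add_neg, ← map_sub, Submodule.mkQ_apply, Submodule.Quotient.mk_eq_zero]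
  constructor
  · intro hpq
    obtain ⟨y, hy, z, hz, hyz⟩ := Submodule.mem_sup.1 hpq
    have hA : p - y - p ∈ A := by simpa using hy
    have hB : p - y - q ∈ B := by rwa [show p - y - q = z by linear_combination -hyz]
    exact ⟨Submodule.Quotient.mk (p - y),
      Prod.ext ((Submodule.Quotient.eq A).2 hA) ((Submodule.Quotient.eq B).2 hB)⟩
  · rintro ⟨c, hc⟩
    obtain ⟨r, rfl⟩ := Submodule.Quotient.mk_surjective _ c
    have hA : r - p ∈ A := (Submodule.Quotient.eq A).1 congr($hc.1)
    have hB : r - q ∈ B := (Submodule.Quotient.eq B).1 congr($hc.2)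
    simpa using sub_mem (Submodule.mem_sup_right hB) (Submodule.mem_sup_left hA)

lemma ExtVanishes.quotient_sup {A B : Ideal R} (hA : ExtVanishes m (R ⧸ A) i)
    (hB : ExtVanishes m (R ⧸ B) i) (hAB : ExtVanishes m (R ⧸ (A ⊓ B)) (i + 1)) :
    ExtVanishes m (R ⧸ (A ⊔ B)) i :=
  have hprod : ExtVanishes m ((R ⧸ A) × (R ⧸ B)) i :=
    middle Function.Exact.inl_snd LinearMap.inl_injective LinearMap.snd_surjective hA hB
  right (exact_prod_factor_coprod_factor A B) (prod_factor_injective A B)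
    (coprod_neg_factor_surjective A B) hprod hAB

end IdealSequences

section Complexes

variable {σ : Type*} {Δ : LowerSet (Finset σ)} {F P Q : Finset σ} {x : σ}

/-- The faces of `Δ` avoiding all vertices in `P`. Here and below simplicial complexes are lower
sets of finite sets, so that the void complex `⊥` is allowed. -/
def deletion (P : Finset σ) (Δ : LowerSet (Finset σ)) : LowerSet (Finset σ) :=
  ⟨{F | F ∈ Δ ∧ Disjoint P F}, fun _ _ h hF ↦ ⟨Δ.lower h hF.1, hF.2.mono_right h⟩⟩

lemma mem_deletion : F ∈ deletion P Δ ↔ F ∈ Δ ∧ Disjoint P F := Iff.rfl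

lemma mem_deletion_singleton : F ∈ deletion {x} Δ ↔ F ∈ Δ ∧ x ∉ F := by
  rw [mem_deletion, disjoint_singleton_left]

lemma deletion_empty : deletion ∅ Δ = Δ :=
  LowerSet.ext <| Set.ext fun F ↦ and_iff_left (disjoint_empty_left F)

variable [DecidableEq σ]

lemma deletion_deletion : deletion P (deletion Q Δ) = deletion (Q ∪ P) Δ :=
  LowerSet.ext <| Set.ext fun F ↦ by
    rw [SetLike.mem_coe, SetLike.mem_coe, mem_deletion, mem_deletion, mem_deletion,
      disjoint_union_left, and_assoc]

lemma deletion_singleton_Iic_insert (hx : x ∉ P) :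
    deletion {x} (LowerSet.Iic (insert x P)) = LowerSet.Iic P :=
  LowerSet.ext <| Set.ext fun F ↦ by
    rw [SetLike.mem_coe, SetLike.mem_coe, mem_deletion_singleton, LowerSet.mem_Iic_iff,
      LowerSet.mem_Iic_iff]
    exact ⟨fun ⟨hF, hxF⟩ ↦ (subset_insert_iff_of_notMem hxF).1 hF,
      fun hF ↦ ⟨hF.trans (subset_insert x P), notMem_mono hF hx⟩⟩

/-- The closed star of `P` in `Δ`. -/
def closedStar (P : Finset σ) (Δ : LowerSet (Finset σ)) : LowerSet (Finset σ) :=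
  ⟨{F | P ∪ F ∈ Δ}, fun _ _ h hF ↦ Δ.lower (union_subset_union_right h) hF⟩

lemma mem_closedStar : F ∈ closedStar P Δ ↔ P ∪ F ∈ Δ := Iff.rfl

lemma closedStar_empty : closedStar ∅ Δ = Δ :=
  LowerSet.ext <| Set.ext fun F ↦ by
    rw [SetLike.mem_coe, mem_closedStar, empty_union, SetLike.mem_coe]

lemma closedStar_closedStar : closedStar P (closedStar Q Δ) = closedStar (Q ∪ P) Δ :=
  LowerSet.ext <| Set.ext fun F ↦ by
    rw [SetLike.mem_coe, SetLike.mem_coe, mem_closedStar, mem_closedStar, mem_closedStar,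
      union_assoc]

/-- `Δ` is a cone with apex `x`. -/
def IsConePoint (x : σ) (Δ : LowerSet (Finset σ)) : Prop :=
  ∀ F ∈ Δ, insert x F ∈ Δ

lemma isConePoint_closedStar (hx : x ∈ P) : IsConePoint x (closedStar P Δ) := fun F hF ↦ by
  rwa [mem_closedStar, union_insert, insert_eq_of_mem (mem_union_left F hx)]

lemma IsConePoint.deletion (h : IsConePoint x Δ) (hx : x ∉ P) : IsConePoint x (deletion P Δ) :=
  fun F hF ↦ ⟨h F hF.1, disjoint_insert_right.2 ⟨hx, hF.2⟩⟩

lemma IsConePoint.closedStar_eq (h : IsConePoint x Δ) : closedStar {x} Δ = Δ :=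
  LowerSet.ext <| Set.ext fun F ↦ ⟨fun hF ↦ Δ.lower (subset_insert x F) hF, h F⟩

end Complexes

section StanleyReisner

variable (K : Type*) [CommRing K] {σ : Type*}

/-- The Stanley–Reisner ideal of `Δ`: the polynomials none of whose monomials is supported on a
face of `Δ`. -/
def stanleyReisnerIdeal (Δ : LowerSet (Finset σ)) : Ideal (MvPolynomial σ K) where
  carrier := {p | ∀ d : σ →₀ ℕ, d.support ∈ Δ → coeff d p = 0}
  zero_mem' _ _ := coeff_zero _
  add_mem' hp hq d hd := by rw [coeff_add, hp d hd, hq d hd, add_zero]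
  smul_mem' c p hp d hd := by
    classical
    rw [smul_eq_mul, coeff_mul]
    refine sum_eq_zero fun e he ↦ ?_
    have hle : e.2 ≤ d := mem_antidiagonal.1 he ▸ le_add_self
    rw [hp e.2 (Δ.lower (Finsupp.support_mono hle) hd), mul_zero]

variable {K} {Δ Γ : LowerSet (Finset σ)} {p : MvPolynomial σ K} {x : σ}

lemma mem_stanleyReisnerIdeal :
    p ∈ stanleyReisnerIdeal K Δ ↔ ∀ d : σ →₀ ℕ, d.support ∈ Δ → coeff d p = 0 := Iff.rfl

lemma monomial_mem_stanleyReisnerIdeal {d : σ →₀ ℕ} (hd : d.support ∉ Δ) (c : K) :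
    monomial d c ∈ stanleyReisnerIdeal K Δ := fun e he ↦ by
  classical
  rw [coeff_monomial, if_neg]
  rintro rfl
  exact hd he

lemma stanleyReisnerIdeal_anti (h : Δ ≤ Γ) : stanleyReisnerIdeal K Γ ≤ stanleyReisnerIdeal K Δ :=
  fun _ hp d hd ↦ hp d (h hd)

lemma stanleyReisnerIdeal_sup :
    stanleyReisnerIdeal K (Δ ⊔ Γ) = stanleyReisnerIdeal K Δ ⊓ stanleyReisnerIdeal K Γ := by
  ext p
  exact ⟨fun h ↦ ⟨fun d hd ↦ h d (Or.inl hd), fun d hd ↦ h d (Or.inr hd)⟩,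
    fun h d hd ↦ hd.elim (h.1 d) (h.2 d)⟩

lemma stanleyReisnerIdeal_inf :
    stanleyReisnerIdeal K (Δ ⊓ Γ) = stanleyReisnerIdeal K Δ ⊔ stanleyReisnerIdeal K Γ := by
  refine le_antisymm (fun p hp ↦ ?_)
    (sup_le (stanleyReisnerIdeal_anti inf_le_left) (stanleyReisnerIdeal_anti inf_le_right))
  rw [← p.support_sum_monomial_coeff]
  refine Submodule.sum_mem _ fun d hd ↦ ?_
  by_cases hΔ : d.support ∈ Δ
  · exact Submodule.mem_sup_right (monomial_mem_stanleyReisnerIdeal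
      (fun hΓ ↦ mem_support_iff.1 hd (hp d ⟨hΔ, hΓ⟩)) _)
  · exact Submodule.mem_sup_left (monomial_mem_stanleyReisnerIdeal hΔ _)

lemma stanleyReisnerIdeal_eq_top (h : ∅ ∉ Δ) : stanleyReisnerIdeal K Δ = ⊤ :=
  (Ideal.eq_top_iff_one _).2 (monomial_mem_stanleyReisnerIdeal (by simpa using h) 1)

lemma mem_idealOfVars : p ∈ idealOfVars σ K ↔ coeff 0 p = 0 := by
  simpa [Finsupp.degree_eq_zero_iff] using mem_pow_idealOfVars_iff' 1 p

lemma idealOfVars_ne_top [Nontrivial K] : idealOfVars σ K ≠ ⊤ := fun h ↦ by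
  simpa [mem_idealOfVars] using (Ideal.eq_top_iff_one _).1 h

lemma stanleyReisnerIdeal_le_idealOfVars (h : ∅ ∈ Δ) :
    stanleyReisnerIdeal K Δ ≤ idealOfVars σ K := fun _ hp ↦
  mem_idealOfVars.2 (hp 0 (by simpa using h))

lemma stanleyReisnerIdeal_Iic_empty :
    stanleyReisnerIdeal K (LowerSet.Iic (∅ : Finset σ)) = idealOfVars σ K := by
  refine le_antisymm (stanleyReisnerIdeal_le_idealOfVars (LowerSet.mem_Iic_iff.2 le_rfl))
    fun p hp d hd ↦ ?_
  have hd : d = 0 := by simpa using hd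
  rw [hd, mem_idealOfVars.1 hp]

lemma sum_single_one_le_iff {A : Finset σ} {d : σ →₀ ℕ} :
    ∑ v ∈ A, Finsupp.single v 1 ≤ d ↔ A ⊆ d.support := by
  classical
  have happly (w : σ) : (∑ v ∈ A, Finsupp.single v 1 : σ →₀ ℕ) w = if w ∈ A then 1 else 0 := by
    simp [Finsupp.finsetSum_apply, Finsupp.single_apply]
  simp only [Finsupp.le_def, happly, subset_iff, Finsupp.mem_support_iff]
  refine forall_congr' fun w ↦ ?_
  split_ifs with hw <;> simp [hw, Nat.one_le_iff_ne_zero]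

lemma span_prod_X_eq_stanleyReisnerIdeal (𝒩 : Set (Finset σ)) :
    Ideal.span ((fun A ↦ ∏ v ∈ A, (X v : MvPolynomial σ K)) '' 𝒩) =
      stanleyReisnerIdeal K (upperClosure 𝒩).compl := by
  have himage : (fun A ↦ ∏ v ∈ A, (X v : MvPolynomial σ K)) '' 𝒩 =
      (fun d ↦ monomial d (1 : K)) '' ((fun A ↦ ∑ v ∈ A, Finsupp.single v 1) '' 𝒩) := by
    simp only [Set.image_image, monomial_sum_one, X]
  ext p
  simp only [himage, mem_ideal_span_monomial_image, Set.exists_mem_image, sum_single_one_le_iff,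
    mem_stanleyReisnerIdeal, UpperSet.mem_compl_iff, mem_upperClosure, mem_support_iff, ne_eq]
  exact forall_congr' fun d ↦ not_imp_comm

lemma stanleyReisnerIdeal_sup_span_X (x : σ) :
    stanleyReisnerIdeal K Δ ⊔ Ideal.span {X x} = stanleyReisnerIdeal K (deletion {x} Δ) := by
  refine le_antisymm (sup_le (stanleyReisnerIdeal_anti fun F hF ↦ hF.1) ?_) fun p hp ↦ ?_
  · rw [Ideal.span_singleton_le_iff_mem]
    refine monomial_mem_stanleyReisnerIdeal (fun hx ↦ (mem_deletion_singleton.1 hx).2 ?_) 1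
    simp
  · rw [← p.support_sum_monomial_coeff]
    refine Submodule.sum_mem _ fun d hd ↦ ?_
    by_cases hx : x ∈ d.support
    · refine Submodule.mem_sup_right (Ideal.mem_span_singleton.2 (X_dvd_monomial.2 (Or.inr ?_)))
      exact Finsupp.mem_support_iff.1 hx
    · refine Submodule.mem_sup_left (monomial_mem_stanleyReisnerIdeal (fun hΔ ↦ ?_) _)
      exact mem_support_iff.1 hd (hp d (mem_deletion_singleton.2 ⟨hΔ, hx⟩))

lemma colon_X_stanleyReisnerIdeal [DecidableEq σ] (x : σ) :
    (stanleyReisnerIdeal K Δ).colon {X x} = stanleyReisnerIdeal K (closedStar {x} Δ) := by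
  have hsupp (d : σ →₀ ℕ) : (Finsupp.single x 1 + d).support ∈ Δ ↔
      d.support ∈ closedStar {x} Δ := by
    rw [Finsupp.support_add_eq_union, Finsupp.support_single x one_ne_zero, mem_closedStar]
  ext p
  rw [Submodule.mem_colon_singleton, smul_eq_mul, mul_comm]
  constructor
  · intro h d hd
    simpa only [coeff_X_mul] using h _ ((hsupp d).2 hd)
  · intro h d hd
    rw [coeff_X_mul']
    split_ifs with hx
    · have hle : Finsupp.single x 1 ≤ d :=
        Finsupp.single_le_iff.2 (Nat.one_le_iff_ne_zero.2 (Finsupp.mem_support_iff.1 hx))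
      exact h _ ((hsupp _).1 (by rwa [add_tsub_cancel_of_le hle]))
    · rfl

end StanleyReisner

section FaceRing

variable (K : Type*) [CommRing K] {σ : Type*}

/-- Vanishing of `Ext^i(K, K[Δ])` for the face ring `K[Δ]`, with `K` the quotient of the polynomial
ring by the ideal of the variables. -/
def FaceRingExtVanishes (Δ : LowerSet (Finset σ)) (i : ℕ) : Prop :=
  ExtVanishes (idealOfVars σ K) (MvPolynomial σ K ⧸ stanleyReisnerIdeal K Δ) i

/-- `depth K[Δ] ≥ r`, expressed by the vanishing of `Ext^i(K, K[Δ])` for `i < r`. -/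
def FaceRingDepthGE (Δ : LowerSet (Finset σ)) (r : ℕ) : Prop :=
  ∀ i < r, FaceRingExtVanishes K Δ i

variable {K} {Δ Γ : LowerSet (Finset σ)} {x : σ} {i r : ℕ}

namespace FaceRingExtVanishes

lemma of_empty_notMem (h : ∅ ∉ Δ) (i : ℕ) : FaceRingExtVanishes K Δ i :=
  have : Subsingleton (MvPolynomial σ K ⧸ stanleyReisnerIdeal K Δ) :=
    Ideal.Quotient.subsingleton_iff.2 (stanleyReisnerIdeal_eq_top h)
  .of_subsingleton i

lemma inf (hΔ : FaceRingExtVanishes K Δ i) (hΓ : FaceRingExtVanishes K Γ i)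
    (hsup : FaceRingExtVanishes K (Δ ⊔ Γ) (i + 1)) : FaceRingExtVanishes K (Δ ⊓ Γ) i := by
  rw [FaceRingExtVanishes, stanleyReisnerIdeal_sup] at hsup
  rw [FaceRingExtVanishes, stanleyReisnerIdeal_inf]
  exact hΔ.quotient_sup hΓ hsup

variable [DecidableEq σ]

lemma of_closedStar_of_deletion (hstar : FaceRingExtVanishes K (closedStar {x} Δ) i)
    (hdel : FaceRingExtVanishes K (deletion {x} Δ) i) : FaceRingExtVanishes K Δ i := by
  rw [FaceRingExtVanishes, ← stanleyReisnerIdeal_sup_span_X] at hdel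
  exact .of_colon_of_sup (colon_X_stanleyReisnerIdeal x) hstar hdel

lemma closedStar_succ (hdel : FaceRingExtVanishes K (deletion {x} Δ) i)
    (hΔ : FaceRingExtVanishes K Δ (i + 1)) : FaceRingExtVanishes K (closedStar {x} Δ) (i + 1) := by
  rw [FaceRingExtVanishes, ← stanleyReisnerIdeal_sup_span_X] at hdel
  exact .colon_succ (colon_X_stanleyReisnerIdeal x) hdel hΔ

lemma deletion_of_isConePoint (hx : IsConePoint x Δ) (hi : FaceRingExtVanishes K Δ i)
    (hi' : FaceRingExtVanishes K Δ (i + 1)) : FaceRingExtVanishes K (deletion {x} Δ) i := by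
  have hcolon := colon_X_stanleyReisnerIdeal (K := K) (Δ := Δ) x
  rw [hx.closedStar_eq] at hcolon
  rw [FaceRingExtVanishes, ← stanleyReisnerIdeal_sup_span_X]
  exact .sup_span_singleton hcolon hi hi'

end FaceRingExtVanishes

namespace FaceRingDepthGE

lemma mono {q : ℕ} (h : FaceRingDepthGE K Δ r) (hq : q ≤ r) : FaceRingDepthGE K Δ q :=
  fun i hi ↦ h i (hi.trans_le hq)

variable {A C : Finset σ}

lemma succ_of_isConePoint [DecidableEq σ] (hx : IsConePoint x Δ)
    (hdel : FaceRingDepthGE K (deletion {x} Δ) r) :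
    FaceRingDepthGE K Δ (r + 1) := fun i hi ↦ by
  have hX : X x ∈ idealOfVars σ K := mem_idealOfVars.2 (coeff_zero_X x)
  have hcolon := colon_X_stanleyReisnerIdeal (K := K) (Δ := Δ) x
  rw [hx.closedStar_eq] at hcolon
  cases i with
  | zero => exact .zero_of_colon_eq_self hX hcolon
  | succ i =>
    refine .succ_of_colon_eq_self hX hcolon ?_
    rw [stanleyReisnerIdeal_sup_span_X]
    exact hdel i (Nat.succ_lt_succ_iff.1 hi)

lemma of_skeleton_subset (hΔC : ∀ F ∈ Δ, F ⊆ C) (hskel : ∀ F ⊆ C, #F ≤ r → F ∈ Δ) (hr : r ≤ #C) :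
    FaceRingDepthGE K Δ r := by
  classical
  induction C using Finset.induction_on generalizing Δ r with
  | empty => exact fun i hi ↦ absurd (hi.trans_le hr) (Nat.not_lt_zero i)
  | insert x C hx ih =>
    obtain _ | r := r
    · exact fun i hi ↦ absurd hi (Nat.not_lt_zero i)
    rw [card_insert_of_notMem hx, Nat.succ_le_succ_iff] at hr
    have hsub (F) (hF : F ∈ Δ) (hxF : x ∉ F) : F ⊆ C :=
      (subset_insert_iff_of_notMem hxF).1 (hΔC F hF)
    have hstar : FaceRingDepthGE K (closedStar {x} Δ) (r + 1) := by
      refine succ_of_isConePoint (isConePoint_closedStar (mem_singleton_self x))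
        (ih (fun F hF ↦ ?_) (fun F hF hcard ↦ ?_) hr)
      · rw [mem_deletion_singleton] at hF
        exact hsub F (Δ.lower subset_union_right hF.1) hF.2
      · exact mem_deletion_singleton.2 ⟨hskel _ (insert_subset_insert x hF)
          ((card_insert_le x F).trans (Nat.succ_le_succ hcard)), notMem_mono hF hx⟩
    rcases hr.eq_or_lt with rfl | hr
    · have hcone : IsConePoint x Δ := fun F hF ↦ by
        have hF : insert x F ⊆ insert x C := insert_subset (mem_insert_self x C) (hΔC F hF)
        exact hskel _ hF ((card_le_card hF).trans_eq (card_insert_of_notMem hx))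
      rwa [hcone.closedStar_eq] at hstar
    · have hdel : FaceRingDepthGE K (deletion {x} Δ) (r + 1) := by
        refine ih (fun F hF ↦ ?_) (fun F hF hcard ↦ ?_) hr
        · exact hsub F hF.1 (mem_deletion_singleton.1 hF).2
        · exact mem_deletion_singleton.2
            ⟨hskel F (hF.trans (subset_insert x C)) hcard, notMem_mono hF hx⟩
      exact fun i hi ↦ .of_closedStar_of_deletion (hstar i hi) (hdel i hi)

lemma Iic (A : Finset σ) : FaceRingDepthGE K (LowerSet.Iic A) #A :=
  of_skeleton_subset (fun _ hF ↦ hF) (fun _ hF _ ↦ hF) le_rfl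

variable [DecidableEq σ]

lemma card_add_of_isConePoint (hA : ∀ a ∈ A, IsConePoint a Δ)
    (hdel : FaceRingDepthGE K (deletion A Δ) r) : FaceRingDepthGE K Δ (#A + r) := by
  induction A using Finset.induction_on generalizing Δ with
  | empty => rwa [card_empty, zero_add, ← deletion_empty (Δ := Δ)]
  | insert a A ha ih =>
    rw [card_insert_of_notMem ha, add_right_comm]
    refine succ_of_isConePoint (hA a (mem_insert_self a A)) (ih (fun b hb ↦ ?_) ?_)
    · refine (hA b (mem_insert_of_mem hb)).deletion ?_
      rintro hba
      exact ha (mem_singleton.1 hba ▸ hb)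
    · rwa [deletion_deletion, ← insert_eq]

lemma of_isConePoint_of_skeleton_subset (hA : ∀ a ∈ A, IsConePoint a Δ)
    (hΔC : ∀ F ∈ Δ, Disjoint A F → F ⊆ C) (hAC : Disjoint A C)
    (hskel : ∀ F ⊆ C, #F ≤ r → F ∈ Δ) (hr : r ≤ #C) : FaceRingDepthGE K Δ (#A + r) :=
  card_add_of_isConePoint hA <| of_skeleton_subset (fun F hF ↦ hΔC F hF.1 hF.2)
    (fun F hF hcard ↦ ⟨hskel F hF hcard, hAC.mono_right hF⟩) hr

end FaceRingDepthGE

lemma not_faceRingExtVanishes_Iic_card [Nontrivial K] (A : Finset σ) :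
    ¬ FaceRingExtVanishes K (LowerSet.Iic A) #A := by
  classical
  induction A using Finset.induction_on with
  | empty =>
    rw [FaceRingExtVanishes, stanleyReisnerIdeal_Iic_empty]
    exact ExtVanishes.not_quotient_self_zero idealOfVars_ne_top
  | insert a A ha ih =>
    intro h
    have hdepth := FaceRingDepthGE.Iic (K := K) (insert a A)
    rw [card_insert_of_notMem ha] at h hdepth
    have hcone : IsConePoint a (LowerSet.Iic (insert a A)) := fun F hF ↦
      insert_subset (mem_insert_self a A) hF
    refine ih ?_
    rw [← deletion_singleton_Iic_insert ha]
    exact .deletion_of_isConePoint hcone (hdepth _ (Nat.lt_succ_self _)) h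

end FaceRing

lemma qdepth_stanleyReisnerIdeal_eq_iff {K : Type*} [Field K] {σ : Type*} [Finite σ]
    {Δ : LowerSet (Finset σ)} (hΔ : ∅ ∈ Δ) {r : ℕ} (hr : 0 < r) (hdepth : FaceRingDepthGE K Δ r) :
    qdepth K (stanleyReisnerIdeal K Δ) = r ↔ ¬ FaceRingExtVanishes K Δ r := by
  have hset : {n | ∃ l : List (MvPolynomial σ K), l.length = n ∧
      (∀ f ∈ l, f ∈ Ideal.span (Set.range (X : σ → MvPolynomial σ K))) ∧
      RingTheory.Sequence.IsRegular (MvPolynomial σ K ⧸ stanleyReisnerIdeal K Δ) l} =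
      {n | FaceRingDepthGE K Δ n} := by
    ext n
    exact (forall_extVanishes_iff_exists_isRegular (stanleyReisnerIdeal_le_idealOfVars hΔ)
      idealOfVars_ne_top n).symm
  rw [qdepth, hset]
  constructor
  · intro hsup hvanish
    have hsucc : FaceRingDepthGE K Δ (r + 1) := fun i hi ↦
      (Nat.lt_succ_iff_lt_or_eq.1 hi).elim (hdepth i) (· ▸ hvanish)
    by_cases hbdd : BddAbove {n | FaceRingDepthGE K Δ n}
    · exact (le_csSup hbdd hsucc).not_gt (hsup ▸ Nat.lt_succ_self r)
    · exact hr.ne (hsup ▸ (Nat.sSup_of_not_bddAbove hbdd).symm)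
  · refine fun hvanish ↦ IsGreatest.csSup_eq ⟨hdepth, fun n hn ↦ ?_⟩
    exact not_lt.1 fun hrn ↦ hvanish (hn r hrn)

section ColorComplex

variable {K : Type*} [CommRing K] {σ ι : Type*} [DecidableEq ι]
  {c : σ → ι} {U T : Finset ι} {F : Finset σ} {n : ι} {t u : ℕ}

/-- The complex of the sets of vertices which carry, under the colouring `c`, only colours from
`U ∪ T` and fewer than `t` colours from `T`. -/
def colorComplex (c : σ → ι) (U T : Finset ι) (t : ℕ) : LowerSet (Finset σ) :=
  ⟨{F | F.image c ⊆ U ∪ T ∧ #(F.image c ∩ T) < t}, fun _ _ h hF ↦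
    ⟨(image_subset_image h).trans hF.1,
      (card_le_card (inter_subset_inter_right (image_subset_image h))).trans_lt hF.2⟩⟩

lemma mem_colorComplex :
    F ∈ colorComplex c U T t ↔ F.image c ⊆ U ∪ T ∧ #(F.image c ∩ T) < t := Iff.rfl

lemma mem_colorComplex_of_card_lt (hF : F.image c ⊆ U ∪ T) (hcard : #F < t) :
    F ∈ colorComplex c U T t :=
  ⟨hF, (card_le_card inter_subset_left).trans_lt (card_image_le.trans_lt hcard)⟩

lemma isConePoint_colorComplex [DecidableEq σ] (hUT : Disjoint U T) {v : σ} (hv : c v ∈ U) :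
    IsConePoint v (colorComplex c U T t) := fun F hF ↦ by
  rw [mem_colorComplex, image_insert, insert_inter_of_notMem (disjoint_left.1 hUT hv)]
  exact ⟨insert_subset (mem_union_left T hv) hF.1, hF.2⟩

lemma colorComplex_insert_sup (hU : n ∉ U) (hT : n ∉ T) (t : ℕ) :
    colorComplex c (insert n U) T t ⊔ colorComplex c U T (t + 1) =
      colorComplex c U (insert n T) (t + 1) := by
  ext F
  simp only [SetLike.mem_coe, LowerSet.mem_sup_iff, mem_colorComplex, insert_union, union_insert]
  by_cases hn : n ∈ F.image c
  · have hnUT : ¬ F.image c ⊆ U ∪ T := fun h ↦ (mem_union.1 (h hn)).elim hU hT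
    rw [inter_insert_of_mem hn, card_insert_of_notMem fun h ↦ hT (mem_inter.1 h).2,
      Nat.succ_lt_succ_iff, or_iff_left fun h ↦ hnUT h.1]
  · rw [inter_insert_of_notMem hn, subset_insert_iff_of_notMem hn, or_iff_right_of_imp]
    exact fun h ↦ ⟨h.1, h.2.trans (Nat.lt_succ_self t)⟩

lemma colorComplex_insert_inf (n : ι) (t : ℕ) :
    colorComplex c (insert n U) T t ⊓ colorComplex c U T (t + 1) = colorComplex c U T t := by
  ext F
  simp only [SetLike.mem_coe, LowerSet.mem_inf_iff, mem_colorComplex, insert_union]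
  exact ⟨fun ⟨hins, h⟩ ↦ ⟨h.1, hins.2⟩, fun h ↦
    ⟨⟨h.1.trans (subset_insert n _), h.2⟩, h.1, h.2.trans (Nat.lt_succ_self t)⟩⟩

variable [Fintype σ]

lemma colorComplex_one (hUT : Disjoint U T) :
    colorComplex c U T 1 = LowerSet.Iic ({v | c v ∈ U} : Finset σ) := by
  ext F
  rw [SetLike.mem_coe, SetLike.mem_coe, mem_colorComplex, LowerSet.mem_Iic_iff, Nat.lt_one_iff,
    card_eq_zero, ← disjoint_iff_inter_eq_empty]
  have himage : F ≤ ({v | c v ∈ U} : Finset σ) ↔ F.image c ⊆ U := by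
    simp [subset_iff]
  rw [himage]
  exact ⟨fun h ↦ h.2.left_le_of_le_sup_right h.1, fun h ↦
    ⟨h.trans subset_union_left, hUT.mono_left h⟩⟩

lemma faceRingDepthGE_colorComplex (hUT : Disjoint U T) (hT : (T : Set ι) ⊆ Set.range c)
    (hu : u ≤ #T) :
    FaceRingDepthGE K (colorComplex c U T (u + 1)) (#{v | c v ∈ U} + u) := by
  classical
  refine .of_isConePoint_of_skeleton_subset (C := {v | c v ∈ T})
    (fun v hv ↦ isConePoint_colorComplex hUT (mem_filter.1 hv).2) (fun F hF hdisj v hv ↦ ?_)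
    (disjoint_filter.2 fun v _ hvU hvT ↦ disjoint_left.1 hUT hvU hvT) (fun F hF hcard ↦ ?_) ?_
  · have hvU : c v ∉ U := fun h ↦ disjoint_right.1 hdisj hv (mem_filter.2 ⟨mem_univ v, h⟩)
    have hvUT : c v ∈ U ∪ T := hF.1 (mem_image_of_mem c hv)
    exact mem_filter.2 ⟨mem_univ v, (mem_union.1 hvUT).resolve_left hvU⟩
  · refine mem_colorComplex_of_card_lt (image_subset_iff.2 fun v hv ↦ ?_) (Nat.lt_succ_of_le hcard)
    exact mem_union_right U (mem_filter.1 (hF hv)).2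
  · refine hu.trans (card_le_card_of_surjOn c fun i hi ↦ ?_)
    obtain ⟨v, rfl⟩ := hT hi
    exact ⟨v, by simpa using hi, rfl⟩

lemma not_faceRingExtVanishes_colorComplex [Nontrivial K] (hUT : Disjoint U T)
    (hT : (T : Set ι) ⊆ Set.range c) (hu : u < #T) :
    ¬ FaceRingExtVanishes K (colorComplex c U T (u + 1)) (#{v | c v ∈ U} + u) := by
  induction T using Finset.induction_on generalizing u with
  | empty => exact absurd hu (Nat.not_lt_zero u)
  | insert n T hnT ih =>
    obtain _ | u := u
    · rw [zero_add, colorComplex_one hUT]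
      exact not_faceRingExtVanishes_Iic_card _
    rw [disjoint_insert_right] at hUT
    rw [coe_insert, Set.insert_subset_iff] at hT
    rw [card_insert_of_notMem hnT, Nat.succ_lt_succ_iff] at hu
    intro h
    have hcard : #{v | c v ∈ U} < #{v | c v ∈ insert n U} := by
      obtain ⟨v, rfl⟩ := hT.1
      refine card_lt_card ((ssubset_iff_of_subset ?_).2 ⟨v, by simp, by simpa using hUT.1⟩)
      exact monotone_filter_right _ fun w _ hw ↦ mem_insert_of_mem hw
    have hdepth_insert := faceRingDepthGE_colorComplex (K := K)
      (disjoint_insert_left.2 ⟨hnT, hUT.2⟩) hT.2 hu.le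
    have hdepth := faceRingDepthGE_colorComplex (K := K) hUT.2 hT.2 hu
    refine ih hUT.2 hT.2 hu ?_
    -- Mayer–Vietoris for the faces with fewer than `u + 1` colours from `T` and those avoiding the
    -- colour `n`.
    rw [← colorComplex_insert_inf n]
    refine .inf (hdepth_insert _ (by lia)) (hdepth _ (by lia)) ?_
    rwa [colorComplex_insert_sup hUT.1 hnT]

end ColorComplex

section Matchings

variable {K : Type*} [CommRing K] {σ : Type*} {G : SimpleGraph σ} {M : Finset (Sym2 σ)}
  {F P : Finset σ} {u v w x : σ} {i k q : ℕ}

lemma isKMatching_empty (G : SimpleGraph σ) : IsKMatching G ∅ 0 := by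
  simp [IsKMatching, IsMatching]

lemma IsMatching.eq_of_mk_mem (hM : IsMatching G M) (hu : s(u, x) ∈ M) (hv : s(v, x) ∈ M) :
    u = v :=
  Sym2.congr_left.1 <| by_contra fun hne ↦
    hM.2 hu hv hne x (Sym2.mem_mk_right u x) (Sym2.mem_mk_right v x)

variable [DecidableEq σ]

lemma IsMatching.disjoint_toFinset (hM : IsMatching G M) :
    (M : Set (Sym2 σ)).PairwiseDisjoint Sym2.toFinset := fun _ he _ hf hne ↦
  disjoint_left.2 fun v hve hvf ↦
    hM.2 he hf hne v (Sym2.mem_toFinset.1 hve) (Sym2.mem_toFinset.1 hvf)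

variable [Fintype σ]

lemma mem_mVerts : v ∈ mVerts M ↔ ∃ e ∈ M, v ∈ e := by
  rw [mVerts, mem_filter, and_iff_right (mem_univ v)]

lemma mVerts_insert : mVerts (insert s(u, v) M) = insert u (insert v (mVerts M)) := by
  ext w
  simp only [mem_mVerts, mem_insert, exists_eq_or_imp, Sym2.mem_iff, or_assoc]

lemma IsKMatching.card_mVerts (hM : IsKMatching G M k) : #(mVerts M) = 2 * k := by
  have hbiUnion : mVerts M = M.biUnion Sym2.toFinset := by
    ext v
    simp [mem_mVerts]
  have hcard (e) (he : e ∈ M) : #e.toFinset = 2 :=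
    Sym2.card_toFinset_of_not_isDiag e (G.not_isDiag_of_mem_edgeSet (hM.1.1 he))
  rw [hbiUnion, card_biUnion hM.1.disjoint_toFinset, sum_const_nat hcard, hM.2, mul_comm]

lemma IsKMatching.insert (hM : IsKMatching G M k) (huv : G.Adj u v) (hu : u ∉ mVerts M)
    (hv : v ∉ mVerts M) : IsKMatching G (insert s(u, v) M) (k + 1) := by
  have hnew (e) (he : e ∈ M) (w) (hw : w ∈ s(u, v)) : w ∉ e := by
    rintro hwe
    have hwM : w ∈ mVerts M := mem_mVerts.2 ⟨e, he, hwe⟩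
    rcases Sym2.mem_iff.1 hw with rfl | rfl
    · exact hu hwM
    · exact hv hwM
  have hnotMem : s(u, v) ∉ M := fun h ↦ hnew _ h u (Sym2.mem_mk_left u v) (Sym2.mem_mk_left u v)
  refine ⟨⟨?_, ?_⟩, by rw [card_insert_of_notMem hnotMem, hM.2]⟩
  · rw [coe_insert]
    exact Set.insert_subset huv hM.1.1
  · rw [coe_insert]
    refine hM.1.2.insert_of_notMem hnotMem fun e he ↦ ⟨hnew e he, fun w hwe hw ↦ ?_⟩
    exact hnew e he w hw hwe

lemma IsMatching.exists_mk_mem (hM : IsMatching G M) (hw : w ∈ mVerts M) :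
    ∃ v, G.Adj w v ∧ s(w, v) ∈ M := by
  obtain ⟨e, he, hwe⟩ := mem_mVerts.1 hw
  obtain ⟨v, rfl⟩ := Sym2.mem_iff_exists.1 hwe
  exact ⟨v, hM.1 he, he⟩

lemma IsMatching.mk_mem_of_forall_adj_eq (hM : IsMatching G M) (hwx : ∀ v, G.Adj w v → v = x)
    (hw : w ∈ mVerts M) : s(w, x) ∈ M := by
  obtain ⟨v, hadj, hmem⟩ := hM.exists_mk_mem hw
  rwa [← hwx v hadj]

/-- The complex of the sets of vertices containing no `k`-matching of `G`; its Stanley–Reisner ideal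
is the squarefree power `I(G)^{[k]}`. -/
def matchingFreeComplex (G : SimpleGraph σ) (k : ℕ) : LowerSet (Finset σ) :=
  ⟨{F | ¬ ∃ M, IsKMatching G M k ∧ mVerts M ⊆ F}, fun _ _ h hF ⟨M, hM, hMF⟩ ↦
    hF ⟨M, hM, hMF.trans h⟩⟩

lemma mem_matchingFreeComplex :
    F ∈ matchingFreeComplex G k ↔ ¬ ∃ M, IsKMatching G M k ∧ mVerts M ⊆ F := Iff.rfl

lemma mem_matchingFreeComplex_of_card_lt (hF : #F < 2 * k) : F ∈ matchingFreeComplex G k :=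
  fun ⟨_, hM, hMF⟩ ↦ (hM.card_mVerts.symm.trans_le (card_le_card hMF)).not_gt hF

lemma matchPow_eq_stanleyReisnerIdeal (K : Type*) [Field K] (G : SimpleGraph σ) (k : ℕ) :
    matchPow K G k = stanleyReisnerIdeal K (matchingFreeComplex G k) := by
  have himage : {f | ∃ M, IsKMatching G M k ∧ f = matchMon K M} =
      (fun A ↦ ∏ v ∈ A, X v) '' (mVerts '' {M | IsKMatching G M k}) := by
    ext f
    simp [matchMon, eq_comm]
  have hcompl : matchingFreeComplex G k =
      (upperClosure (mVerts '' {M | IsKMatching G M k})).compl := by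
    ext F
    simp [mem_matchingFreeComplex]
  rw [matchPow, himage, hcompl, span_prod_X_eq_stanleyReisnerIdeal]

-- Once `x` is gone, no matching can cover its pendant neighbour `w`.
lemma isConePoint_deletion_matchingFreeComplex (hwx : ∀ v, G.Adj w v → v = x) (hne : w ≠ x)
    (hx : x ∉ P) : IsConePoint w (deletion {x} (closedStar P (matchingFreeComplex G k))) := by
  intro F hF
  rw [mem_deletion_singleton] at hF ⊢
  have hxF : x ∉ insert w F := by
    rw [mem_insert, not_or]
    exact ⟨hne.symm, hF.2⟩
  refine ⟨fun ⟨M, hM, hMF⟩ ↦ hF.1 ⟨M, hM, ?_⟩, hxF⟩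
  have hwM : w ∉ mVerts M := fun hw ↦ by
    have hxM : x ∈ mVerts M :=
      mem_mVerts.2 ⟨_, hM.1.mk_mem_of_forall_adj_eq hwx hw, Sym2.mem_mk_right w x⟩
    exact (mem_union.1 (hMF hxM)).elim hx hxF
  rwa [union_insert, subset_insert_iff_of_notMem hwM] at hMF

lemma faceRingDepthGE_deletion_matchingFreeComplex (hwx : ∀ v, G.Adj w v → v = x) (hne : w ≠ x)
    (hx : x ∉ P) (hw : w ∉ P) (hq : q ≤ 2 * k) (hqσ : q < Fintype.card σ) :
    FaceRingDepthGE K (deletion {x} (closedStar P (matchingFreeComplex G k))) q := by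
  have hxP : x ∉ insert w P := by
    rw [mem_insert, not_or]
    exact ⟨hne.symm, hx⟩
  have hcone (v) (hv : v ∈ insert w P) :
      IsConePoint v (deletion {x} (closedStar P (matchingFreeComplex G k))) := by
    rcases mem_insert.1 hv with rfl | hv
    · exact isConePoint_deletion_matchingFreeComplex hwx hne hx
    · refine (isConePoint_closedStar hv).deletion fun h ↦ hx ?_
      rwa [← mem_singleton.1 h]
  have hcard : #(insert w P) = #P + 1 := card_insert_of_notMem hw
  rcases le_total q #(insert w P) with hqP | hqP
  · have := FaceRingDepthGE.card_add_of_isConePoint (K := K) (r := 0) hcone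
      fun i hi ↦ absurd hi (Nat.not_lt_zero i)
    exact this.mono hqP
  · rw [← Nat.add_sub_of_le hqP]
    refine .of_isConePoint_of_skeleton_subset (C := (insert x (insert w P))ᶜ) hcone ?_ ?_ ?_ ?_
    · intro F hF hdisj
      rw [subset_compl_iff_disjoint_left, disjoint_insert_left]
      exact ⟨(mem_deletion_singleton.1 hF).2, hdisj⟩
    · exact disjoint_compl_right.mono_left (subset_insert x _)
    · intro F hF hFq
      rw [subset_compl_iff_disjoint_left, disjoint_insert_left] at hF
      refine mem_deletion_singleton.2 ⟨mem_matchingFreeComplex_of_card_lt ?_, hF.1⟩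
      have := card_union_le P F
      lia
    · rw [card_compl, card_insert_of_notMem hxP]
      lia

lemma faceRingExtVanishes_of_closedStar_matchingFreeComplex
    (hP : ∀ x ∈ P, ∃ w ∉ P, ∀ v, G.Adj w v → v = x) (hi : i < 2 * k) (hiσ : i + 1 < Fintype.card σ)
    (hstar : FaceRingExtVanishes K (closedStar P (matchingFreeComplex G k)) i) :
    FaceRingExtVanishes K (matchingFreeComplex G k) i := by
  induction P using Finset.induction_on with
  | empty => rwa [closedStar_empty] at hstar
  | insert x P hx ih =>
    obtain ⟨w, hw, hwx⟩ := hP x (mem_insert_self x P)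
    rw [mem_insert, not_or] at hw
    refine ih (fun y hy ↦ ?_) (.of_closedStar_of_deletion (x := x) ?_ ?_)
    · obtain ⟨z, hz, hzy⟩ := hP y (mem_insert_of_mem hy)
      exact ⟨z, notMem_mono (subset_insert x P) hz, hzy⟩
    · rwa [closedStar_closedStar, union_singleton]
    · exact faceRingDepthGE_deletion_matchingFreeComplex hwx hw.1 hx hw.2 hi hiσ i i.lt_succ_self

lemma faceRingExtVanishes_closedStar_matchingFreeComplex
    (hP : ∀ x ∈ P, ∃ w ∉ P, ∀ v, G.Adj w v → v = x) (hi : i < 2 * k) (hiσ : i + 1 < Fintype.card σ)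
    (hΔ : FaceRingExtVanishes K (matchingFreeComplex G k) (i + 1)) :
    FaceRingExtVanishes K (closedStar P (matchingFreeComplex G k)) (i + 1) := by
  induction P using Finset.induction_on with
  | empty => rwa [closedStar_empty]
  | insert x P hx ih =>
    obtain ⟨w, hw, hwx⟩ := hP x (mem_insert_self x P)
    rw [mem_insert, not_or] at hw
    rw [← union_singleton, ← closedStar_closedStar]
    refine .closedStar_succ ?_ (ih fun y hy ↦ ?_)
    · exact faceRingDepthGE_deletion_matchingFreeComplex hwx hw.1 hx hw.2 hi hiσ i i.lt_succ_self
    · obtain ⟨z, hz, hzy⟩ := hP y (mem_insert_of_mem hy)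
      exact ⟨z, notMem_mono (subset_insert x P) hz, hzy⟩

lemma qdepth_matchPow_eq_iff {K : Type*} [Field K] (hk : 1 ≤ k) (hkσ : 2 * k ≤ Fintype.card σ) :
    qdepth K (matchPow K G k) = 2 * k - 1 ↔
      ¬ FaceRingExtVanishes K (matchingFreeComplex G k) (2 * k - 1) := by
  rw [matchPow_eq_stanleyReisnerIdeal]
  refine qdepth_stanleyReisnerIdeal_eq_iff
    (mem_matchingFreeComplex_of_card_lt (by rw [card_empty]; lia)) (by lia) ?_
  refine .of_skeleton_subset (C := univ) (fun F _ ↦ subset_univ F) (fun F _ hF ↦ ?_) ?_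
  · exact mem_matchingFreeComplex_of_card_lt (by lia)
  · rw [card_univ]
    lia

end Matchings

lemma isChordal_of_isIndepSet_of_isClique_compl {V : Type*} {H : SimpleGraph V} {S : Set V}
    (hS : H.IsIndepSet S) (hSc : H.IsClique Sᶜ) : IsChordal H := by
  rintro m hm ⟨f, hf, hadj⟩
  have hcast (n : ℕ) (hn : 0 < n) (hnm : n < m) : (n : ZMod m) ≠ 0 := fun h ↦
    Nat.not_dvd_of_pos_of_lt hn hnm ((ZMod.natCast_eq_zero_iff n m).1 h)
  have h1 : (1 : ZMod m) ≠ 0 := mod_cast hcast 1 (by lia) (by lia)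
  have h2 : (2 : ZMod m) ≠ 0 := mod_cast hcast 2 (by lia) (by lia)
  have h3 : (3 : ZMod m) ≠ 0 := mod_cast hcast 3 (by lia) (by lia)
  have hmem_succ (i) (hi : f i ∈ S) : f (i + 1) ∉ S := fun hi' ↦
    hS hi hi' (hf.ne fun h ↦ h1 (by linear_combination -h)) ((hadj _ _).2 (Or.inr rfl))
  have hnotMem_add_two (i) (hi : f i ∉ S) : f (i + 2) ∈ S := by
    by_contra hi'
    have hne : i ≠ i + 2 := fun h ↦ h2 (by linear_combination -h)
    rcases (hadj _ _).1 (hSc hi hi' (hf.ne hne)) with h | h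
    · exact h3 (by linear_combination -h)
    · exact h1 (by linear_combination h)
  have hnotMem (i) : f i ∉ S := fun hi ↦ by
    have hi3 : f (i + 1 + 2) ∈ S := hnotMem_add_two _ (hmem_succ i hi)
    have hi2 : f (i + 2) ∉ S := fun h ↦ hmem_succ _ h (by convert hi3 using 2; ring)
    have hi4 : f (i + 2 + 2) ∈ S := hnotMem_add_two _ hi2
    exact hmem_succ _ hi3 (by convert hi4 using 2; ring)
  exact hnotMem _ (hnotMem_add_two 0 (hnotMem 0))

section Whiskered

variable {s : ℕ} {a : Fin s → ℕ} {i j : Fin s} {p q : Σ i : Fin s, Fin (a i)} {v : WVert s a}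
  {k : ℕ} {M : Finset (Sym2 (WVert s a))} {R : Finset (Σ i : Fin s, Fin (a i))} {C : Finset (Fin s)}

lemma whiskered_adj_inl_inl : (whiskered s a).Adj (.inl i) (.inl j) ↔ i ≠ j := by
  simp [whiskered]

lemma whiskered_adj_inl_inr : (whiskered s a).Adj (.inl i) (.inr p) ↔ p.1 = i := by
  simp [whiskered]

lemma not_whiskered_adj_inr_inr : ¬ (whiskered s a).Adj (.inr p) (.inr q) := by
  simp [whiskered]

lemma eq_inl_of_whiskered_adj_inr (h : (whiskered s a).Adj (.inr p) v) : v = .inl p.1 := by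
  rcases v with i | q
  · rw [whiskered_adj_inl_inr.1 h.symm]
  · exact absurd h not_whiskered_adj_inr_inr

lemma isChordal_compl_whiskered : IsChordal (whiskered s a)ᶜ := by
  refine isChordal_of_isIndepSet_of_isClique_compl (S := Set.range Sum.inl) ?_ ?_
  · rw [SimpleGraph.isIndepSet_compl]
    rintro _ ⟨i, rfl⟩ _ ⟨j, rfl⟩ hne
    exact whiskered_adj_inl_inl.2 (ne_of_apply_ne Sum.inl hne)
  · rw [Set.compl_range_inl, SimpleGraph.isClique_compl]
    rintro _ ⟨p, rfl⟩ _ ⟨q, rfl⟩ -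
    exact not_whiskered_adj_inr_inr

lemma IsMatching.mk_mem_of_inr_mem_mVerts (hM : IsMatching (whiskered s a) M)
    (hp : .inr p ∈ mVerts M) : s(.inr p, .inl p.1) ∈ M :=
  hM.mk_mem_of_forall_adj_eq (fun _ ↦ eq_inl_of_whiskered_adj_inr) hp

lemma IsKMatching.two_mul_le (hM : IsKMatching (whiskered s a) M k) :
    2 * k ≤ s + #((mVerts M).toRight.image Sigma.fst) := by
  have hinj : Set.InjOn Sigma.fst ((mVerts M).toRight : Set (Σ i : Fin s, Fin (a i))) := by
    intro p hp q hq hpq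
    have hp := hM.1.mk_mem_of_inr_mem_mVerts (mem_toRight.1 hp)
    have hq := hM.1.mk_mem_of_inr_mem_mVerts (mem_toRight.1 hq)
    rw [hpq] at hp
    exact Sum.inr_injective (hM.1.eq_of_mk_mem hp hq)
  rw [← hM.card_mVerts, ← card_toLeft_add_card_toRight, card_image_of_injOn hinj]
  gcongr
  exact card_finset_fin_le _

lemma exists_isKMatching_whiskered_subset (hk : 2 * k ≤ #C + #(C ∩ R.image Sigma.fst)) :
    ∃ M, IsKMatching (whiskered s a) M k ∧ mVerts M ⊆ C.disjSum R := by
  induction k generalizing C with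
  | zero => exact ⟨∅, isKMatching_empty _, by simp [mVerts]⟩
  | succ k ih =>
    rcases (C ∩ R.image Sigma.fst).eq_empty_or_nonempty with hCR | ⟨i, hi⟩
    · rw [hCR, card_empty, add_zero] at hk
      obtain ⟨i, hi, j, hj, hij⟩ := one_lt_card.1 (show 1 < #C by lia)
      have hcard : #((C.erase i).erase j) + 1 + 1 = #C := by
        rw [card_erase_add_one (mem_erase.2 ⟨hij.symm, hj⟩), card_erase_add_one hi]
      obtain ⟨M, hM, hMC⟩ := ih (C := (C.erase i).erase j) (by lia)
      refine ⟨_, hM.insert (whiskered_adj_inl_inl.2 hij) (fun h ↦ ?_) (fun h ↦ ?_), ?_⟩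
      · simpa using hMC h
      · simpa using hMC h
      · rw [mVerts_insert]
        refine insert_subset (inl_mem_disjSum.2 hi) (insert_subset (inl_mem_disjSum.2 hj) ?_)
        exact hMC.trans
          (disjSum_mono_left R ((erase_subset j _).trans (erase_subset i C)))
    · obtain ⟨hiC, hiR⟩ := mem_inter.1 hi
      obtain ⟨p, hp, rfl⟩ := mem_image.1 hiR
      have hcardC := card_erase_add_one hiC
      have hcardCR := card_erase_add_one hi
      rw [← erase_inter] at hcardCR
      obtain ⟨M, hM, hMC⟩ := ih (C := C.erase p.1) (by lia)
      have hpM : .inl p.1 ∉ mVerts M := fun h ↦ by simpa using hMC h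
      refine ⟨_, hM.insert (whiskered_adj_inl_inr.2 rfl) hpM (fun h ↦ hpM ?_), ?_⟩
      · exact mem_mVerts.2 ⟨_, hM.1.mk_mem_of_inr_mem_mVerts h, Sym2.mem_mk_right _ _⟩
      · rw [mVerts_insert]
        refine insert_subset (inl_mem_disjSum.2 hiC) (insert_subset (inr_mem_disjSum.2 hp) ?_)
        exact hMC.trans (disjSum_mono_left R (erase_subset _ C))

lemma exists_isKMatching_whiskered_iff :
    (∃ M, IsKMatching (whiskered s a) M k ∧ mVerts M ⊆ univ.disjSum R) ↔
      2 * k ≤ s + #(R.image Sigma.fst) := by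
  constructor
  · rintro ⟨M, hM, hMR⟩
    have hsub : (mVerts M).toRight ⊆ R := (subset_disjSum.1 hMR).2
    exact hM.two_mul_le.trans (by gcongr)
  · intro hk
    exact exists_isKMatching_whiskered_subset (by simpa using hk)

lemma matchNum_whiskered (ha : ∀ i, 1 ≤ a i) : matchNum (whiskered s a) = s := by
  have himage : (univ : Finset (Σ i : Fin s, Fin (a i))).image Sigma.fst = univ :=
    image_univ_of_surjective fun i ↦ ⟨⟨i, 0, ha i⟩, rfl⟩
  have hiff (k) : (∃ M, IsKMatching (whiskered s a) M k) ↔ k ≤ s := by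
    have := exists_isKMatching_whiskered_iff (a := a) (k := k) (R := univ)
    rw [himage, card_univ, Fintype.card_fin, ← two_mul, Nat.mul_le_mul_left_iff two_pos] at this
    simpa only [univ_disjSum_univ, subset_univ, and_true] using this
  simp only [matchNum, hiff]
  exact csSup_Iic

lemma two_mul_le_card_WVert (ha : ∀ i, 1 ≤ a i) : 2 * s ≤ Fintype.card (WVert s a) := by
  have : s ≤ ∑ i, a i := by simpa using card_nsmul_le_sum univ a 1 fun i _ ↦ ha i
  simp only [Fintype.card_sum, Fintype.card_sigma, Fintype.card_fin]
  lia

/-- The colouring of the whiskers by the vertex they are attached to; the vertices of `K_s` all get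
the extra colour `none`. -/
def attachingVertex : WVert s a → Option (Fin s) :=
  Sum.elim (fun _ ↦ none) fun p ↦ some p.1

lemma closedStar_matchingFreeComplex_whiskered :
    closedStar (univ.disjSum ∅) (matchingFreeComplex (whiskered s a) k) =
      colorComplex attachingVertex {none} {none}ᶜ (2 * k - s) := by
  ext F
  have hunion : univ.disjSum ∅ ∪ F = univ.disjSum F.toRight := by
    ext (i | p) <;> simp
  have hcolors : F.image attachingVertex ∩ {none}ᶜ =
      (F.toRight.image Sigma.fst).map Function.Embedding.some := by
    ext (_ | i) <;> simp [attachingVertex]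
  rw [SetLike.mem_coe, SetLike.mem_coe, mem_closedStar, mem_matchingFreeComplex, hunion,
    exists_isKMatching_whiskered_iff, mem_colorComplex, hcolors, card_map, union_compl,
    and_iff_right (subset_univ _)]
  lia

lemma card_attachingVertex_eq_none :
    #{v : WVert s a | attachingVertex v ∈ ({none} : Finset (Option (Fin s)))} = s := by
  have hcore : ({v : WVert s a | attachingVertex v ∈ ({none} : Finset (Option (Fin s)))} :
      Finset (WVert s a)) = univ.disjSum ∅ := by
    ext (i | p) <;> simp [attachingVertex]
  rw [hcore, card_disjSum, card_fin, card_empty, add_zero]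

lemma exists_whisker_of_mem_core (ha : ∀ i, 1 ≤ a i) (v : WVert s a) (hv : v ∈ univ.disjSum ∅) :
    ∃ w ∉ univ.disjSum ∅, ∀ u, (whiskered s a).Adj w u → u = v := by
  rcases v with i | p
  · exact ⟨.inr ⟨i, 0, ha i⟩, by simp, fun _ ↦ eq_inl_of_whiskered_adj_inr⟩
  · simp at hv

variable {K : Type*}

lemma faceRingExtVanishes_matchingFreeComplex_whiskered [CommRing K] (ha : ∀ i, 1 ≤ a i)
    (hk : 1 ≤ k) (hks : 2 * k ≤ s) :
    FaceRingExtVanishes K (matchingFreeComplex (whiskered s a) k) (2 * k - 1) := by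
  have hcard := two_mul_le_card_WVert ha
  refine faceRingExtVanishes_of_closedStar_matchingFreeComplex (exists_whisker_of_mem_core ha)
    (by lia) (by lia) ?_
  rw [closedStar_matchingFreeComplex_whiskered, Nat.sub_eq_zero_of_le hks]
  exact .of_empty_notMem (fun h ↦ absurd (mem_colorComplex.1 h).2 (Nat.not_lt_zero _)) _

lemma not_faceRingExtVanishes_matchingFreeComplex_whiskered [CommRing K] [Nontrivial K]
    (ha : ∀ i, 1 ≤ a i) (hks : k ≤ s) (hsk : s < 2 * k) :
    ¬ FaceRingExtVanishes K (matchingFreeComplex (whiskered s a) k) (2 * k - 1) := by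
  have hcard := two_mul_le_card_WVert ha
  obtain ⟨u, hu⟩ := Nat.exists_eq_add_of_lt hsk
  have hcolors : (({none}ᶜ : Finset (Option (Fin s))) : Set (Option (Fin s))) ⊆
      Set.range (attachingVertex (a := a)) := by
    rintro (_ | i) hi
    · simp at hi
    · exact ⟨.inr ⟨i, 0, ha i⟩, rfl⟩
  have hcolors_card : #({none}ᶜ : Finset (Option (Fin s))) = s := by simp [card_compl]
  have hnot := not_faceRingExtVanishes_colorComplex (K := K) disjoint_compl_right hcolors
    (show u < _ by lia)
  rw [card_attachingVertex_eq_none] at hnot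
  intro hvanish
  apply hnot
  rw [show 2 * k - 1 = 2 * k - 2 + 1 by lia] at hvanish
  have hstar := faceRingExtVanishes_closedStar_matchingFreeComplex
    (exists_whisker_of_mem_core ha) (by lia) (by lia) hvanish
  rwa [closedStar_matchingFreeComplex_whiskered, show 2 * k - s = u + 1 by lia,
    show 2 * k - 2 + 1 = s + u by lia] at hstar

lemma qdepth_matchPow_whiskered_eq_iff [Field K] (ha : ∀ i, 1 ≤ a i) (hk : 1 ≤ k) (hks : k ≤ s) :
    qdepth K (matchPow K (whiskered s a) k) = 2 * k - 1 ↔ s < 2 * k := by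
  have hcard := two_mul_le_card_WVert ha
  rw [qdepth_matchPow_eq_iff hk (by lia)]
  exact ⟨fun h ↦ not_le.1 fun hsk ↦
      h (faceRingExtVanishes_matchingFreeComplex_whiskered ha hk hsk),
    not_faceRingExtVanishes_matchingFreeComplex_whiskered ha hks⟩

end Whiskered

/-- Let `G = H(a_1, …, a_s)` with `s ≥ 2` and `a_i ≥ 1` for all
`i`. Then (a) `ν(G) = s`; (b) `G` is cochordal; and (c) for `1 ≤ k ≤ s`,
`depth(S/I(G)^{[k]}) = 2k − 1` if and only if `⌊s/2⌋ + 1 ≤ k ≤ s`. -/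
theorem whiskered_min_depth_iff {K : Type*} [Field K]
    (s : ℕ) (hs : 2 ≤ s) (a : Fin s → ℕ) (ha : ∀ i, 1 ≤ a i) :
    matchNum (whiskered s a) = s ∧
    IsChordal (whiskered s a)ᶜ ∧
    ∀ k : ℕ, 1 ≤ k → k ≤ s →
      (qdepth K (matchPow K (whiskered s a) k) = 2 * k - 1 ↔
        s / 2 + 1 ≤ k ∧ k ≤ s) := by
  refine ⟨matchNum_whiskered ha, isChordal_compl_whiskered, fun k hk hks ↦ ?_⟩
  rw [qdepth_matchPow_whiskered_eq_iff ha hk hks]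
  lia
end
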